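/- For every k ∈ ℕ, every p < 1/2 and every ε > 0, there exist an integer m > k and δ > 0 such that for all q ∈ [0, δ), P_{p,q}(C_m(S_m)) < ε, where S_m = [0, m−1]²×{0,1,…,k} and C_m(S_m) is the event that some vertex of S_m is connected by a path of open edges to a vertex at distance m from S_m (distance measured in the maximum norm). -/

import Mathlib

open MeasureTheory Set
open scoped ENNReal

namespace AnisoSlab

/-! ### A concrete construction of countable products of Bernoulli measures

The product Bernoulli measure on `ι → Bool` (each coordinate `i` open with
probability `P i`, independently) is realized as the pushforward of Lebesgue
measure on `[0,1)`: the binary digits of a uniform sample are i.i.d. fair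
coins; regrouping them along a pairing function yields countably many
independent uniform samples, and comparing the `i`-th sample with `P i`
yields the desired independent Bernoulli coordinates. -/

/-- The `n`-th binary digit of `x` (digits after the binary point). -/
noncomputable def binDigit (n : ℕ) (x : ℝ) : Bool :=
  decide (⌊x * 2 ^ (n + 1)⌋ % 2 = 1)

/-- Countably many independent uniform-`[0,1]` samples extracted from a single
uniform sample `x` on `[0,1)`, by regrouping its binary digits. -/
noncomputable def unifSample (i : ℕ) (x : ℝ) : ℝ :=
  ∑' n : ℕ, if binDigit (Nat.pair i n) x then ((2 : ℝ) ^ (n + 1))⁻¹ else 0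

/-- The product Bernoulli measure on `ι → Bool`, coordinate `i` being `true`
with probability `P i`, independently over `i`. -/
noncomputable def bernoulliProduct {ι : Type*} [Encodable ι] (P : ι → ℝ) :
    Measure (ι → Bool) :=
  Measure.map (fun x i => decide (unifSample (Encodable.encode i) x < P i))
    (volume.restrict (Set.Ico (0 : ℝ) 1))

/-! ### The slab `S^k` and anisotropic bond percolation on it -/

/-- Ambient vertices: `ℤ³`; the slab `S^k` uses those with third coordinate in `{0, …, k}`. -/
abbrev Vtx : Type := ℤ × ℤ × ℤ

/-- The three unit coordinate vectors. -/
def dvec : Fin 3 → Vtx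
  | 0 => (1, 0, 0)
  | 1 => (0, 1, 0)
  | 2 => (0, 0, 1)

/-- A bond is indexed by its lower endpoint `v` and a direction `i`; it joins
`v` to `v + dvec i`. Directions `0, 1` give radial (horizontal) bonds, and
direction `2` gives axial (vertical) bonds. -/
abbrev EdgeIdx : Type := Vtx × Fin 3

/-- A percolation configuration: each bond is open (`true`) or closed (`false`). -/
abbrev Config : Type := EdgeIdx → Bool

/-- `v` is a vertex of the slab `S^k`. -/
def InSlab (k : ℕ) (v : Vtx) : Prop := 0 ≤ v.2.2 ∧ v.2.2 ≤ k

/-- `(v, i)` is a bond of the slab `S^k` (both endpoints lie in the slab). -/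
def IsEdge (k : ℕ) (e : EdgeIdx) : Prop := InSlab k e.1 ∧ InSlab k (e.1 + dvec e.2)

/-- The measure `P_{p,q}` on configurations of `S^k`: each radial (horizontal)
bond is open with probability `p` and each axial (vertical) bond is open with
probability `q`, independently. -/
noncomputable def slabMeasure (k : ℕ) (p q : ℝ) : Measure Config :=
  bernoulliProduct (fun e => if e.2 = 2 then q else p)

/-- `x` and `y` are joined by an open bond of `S^k` in the configuration `ω`. -/
def OpenAdj (k : ℕ) (ω : Config) (x y : Vtx) : Prop :=
  ∃ i : Fin 3,
    (y = x + dvec i ∧ IsEdge k (x, i) ∧ ω (x, i) = true) ∨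
    (x = y + dvec i ∧ IsEdge k (y, i) ∧ ω (y, i) = true)

/-- The open cluster of the vertex `x` in the configuration `ω`. -/
def cluster (k : ℕ) (ω : Config) (x : Vtx) : Set Vtx :=
  {y | Relation.ReflTransGen (OpenAdj k ω) x y}

/-- The percolation function `θ(p,q) = P_{p,q}(0 ↔ ∞)`. -/
noncomputable def theta (k : ℕ) (p q : ℝ) : ℝ≥0∞ :=
  slabMeasure k p q {ω | (cluster k ω 0).Infinite}

/-- `p_k = 1 - (1/2)^{1/(k+1)}`, the horizontal critical value at `q = 1`. -/
noncomputable def pCrit (k : ℕ) : ℝ := 1 - (1 / 2 : ℝ) ^ ((1 : ℝ) / (k + 1))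

/-- The critical curve `q_c(p) = sup {q ∈ [0,1] : θ(p,q) = 0}`. -/
noncomputable def qc (k : ℕ) (p : ℝ) : ℝ :=
  sSup {q : ℝ | q ∈ Set.Icc (0 : ℝ) 1 ∧ theta k p q = 0}

/-- The critical curve `p_c(q) = sup {p ∈ [0,1] : θ(p,q) = 0}`. -/
noncomputable def pc (k : ℕ) (q : ℝ) : ℝ :=
  sSup {p : ℝ | p ∈ Set.Icc (0 : ℝ) 1 ∧ theta k p q = 0}


/-- The sup-norm (maximum-norm) distance on `ℤ³`. -/
def supDist (x y : Vtx) : ℤ := max |x.1 - y.1| (max |x.2.1 - y.2.1| |x.2.2 - y.2.2|)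

/-- The event `C_m(A)`: some vertex of `A` is connected by an open path to a
vertex at maximum-norm distance `m` from `A`. -/
def CmEvent (k m : ℕ) (A : Set Vtx) : Set Config :=
  {ω | ∃ x ∈ A, ∃ y ∈ cluster k ω x,
        (∀ a ∈ A, (m : ℤ) ≤ supDist y a) ∧ ∃ a ∈ A, supDist y a = (m : ℤ)}

/-- The box `S_m = [0, m-1]² × {0,…,k}`. -/
def Sm (k m : ℕ) : Set Vtx :=
  {v | 0 ≤ v.1 ∧ v.1 ≤ (m : ℤ) - 1 ∧ 0 ≤ v.2.1 ∧ v.2.1 ≤ (m : ℤ) - 1 ∧ InSlab k v}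

/-! ### Generic product probability -/

/-- Lebesgue measure on `[0,1)`. -/
noncomputable def lam : Measure ℝ := volume.restrict (Set.Ico (0 : ℝ) 1)

instance lam_prob : IsProbabilityMeasure lam := by
  constructor
  simp [lam]

/-- i.i.d. uniform variables. -/
noncomputable def PP (ι : Type*) : Measure (ι → ℝ) := Measure.infinitePi (fun _ : ι => lam)

instance PP_prob (ι : Type*) : IsProbabilityMeasure (PP ι) := by
  unfold PP; infer_instance

/-- `A` depends only on the coordinates in `F`. -/
def Dep {ι α : Type*} (A : Set (ι → α)) (F : Set ι) : Prop :=
  ∀ ⦃ω ω' : ι → α⦄, (∀ e ∈ F, ω e = ω' e) → ω ∈ A → ω' ∈ A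

/-- `A` depends only on finitely many coordinates. -/
def Fin' {ι α : Type*} (A : Set (ι → α)) : Prop := ∃ F : Finset ι, Dep A (F : Set ι)

section generic
variable {ι α : Type*}

lemma Dep.mono {A : Set (ι → α)} {F G : Set ι} (h : Dep A F) (hFG : F ⊆ G) : Dep A G :=
  fun _ _ hw hA => h (fun e he => hw e (hFG he)) hA

lemma Dep.inter {A : Set (ι → α)} {F G : Set ι} (h : Dep A F) (h' : Dep A G) :
    Dep A (F ∩ G) := by
  classical
  intro ω ω' hw hA
  let ω'' : ι → α := fun e => if e ∈ F then ω e else ω' e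
  have h1 : ω'' ∈ A := h (fun e he => by simp [ω'', he]) hA
  refine h' (fun e he => ?_) h1
  by_cases hF : e ∈ F
  · simp [ω'', hF, hw e ⟨hF, he⟩]
  · simp [ω'', hF]

lemma Dep.compl {A : Set (ι → α)} {F : Set ι} (h : Dep A F) : Dep Aᶜ F :=
  fun _ _ hw hA hA' => hA (h (fun e he => (hw e he).symm) hA')

lemma Dep.and {A B : Set (ι → α)} {F : Set ι} (h : Dep A F) (h' : Dep B F) : Dep (A ∩ B) F :=
  fun _ _ hw hA => ⟨h hw hA.1, h' hw hA.2⟩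

lemma Dep.or {A B : Set (ι → α)} {F : Set ι} (h : Dep A F) (h' : Dep B F) : Dep (A ∪ B) F :=
  fun _ _ hw hA => hA.elim (fun x => Or.inl (h hw x)) (fun x => Or.inr (h' hw x))

lemma Fin'.of {A : Set (ι → α)} {F : Set ι} (h : Dep A F) (hF : F.Finite) : Fin' A :=
  ⟨hF.toFinset, by simpa using h⟩

lemma Fin'.compl {A : Set (ι → α)} (h : Fin' A) : Fin' Aᶜ := by
  obtain ⟨F, hF⟩ := h
  exact ⟨F, hF.compl⟩

lemma Fin'.inter {A B : Set (ι → α)} (h : Fin' A) (h' : Fin' B) : Fin' (A ∩ B) := by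
  classical
  obtain ⟨F, hF⟩ := h
  obtain ⟨G, hG⟩ := h'
  exact ⟨F ∪ G, (hF.mono (by simp)).and (hG.mono (by simp))⟩

lemma Fin'.union {A B : Set (ι → α)} (h : Fin' A) (h' : Fin' B) : Fin' (A ∪ B) := by
  classical
  obtain ⟨F, hF⟩ := h
  obtain ⟨G, hG⟩ := h'
  exact ⟨F ∪ G, (hF.mono (by simp)).or (hG.mono (by simp))⟩

/-- restriction form of a dependent event -/
lemma Dep.eq_preimage {A : Set (ι → α)} {F : Finset ι} (h : Dep A (F : Set ι)) :
    A = (fun ω : ι → α => fun i : F => ω i) ⁻¹' ((fun ω : ι → α => fun i : F => ω i) '' A) := by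
  ext ω
  constructor
  · intro hω
    exact ⟨ω, hω, rfl⟩
  · rintro ⟨ω', h', he⟩
    exact h (fun e hee => congrFun he ⟨e, hee⟩) h'

variable [MeasurableSpace α] [Finite α] [MeasurableSingletonClass α]

lemma Fin'.meas {A : Set (ι → α)} (h : Fin' A) : MeasurableSet A := by
  obtain ⟨F, hF⟩ := h
  rw [hF.eq_preimage]
  have hm : Measurable (fun ω : ι → α => fun i : F => ω i) :=
    measurable_pi_lambda _ fun i => measurable_pi_apply _
  exact hm (Set.toFinite _).measurableSet

lemma indepG (f : ι → ℝ → α) (hf : ∀ i, Measurable (f i)) {A B : Set (ι → α)} {F G : Set ι}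
    (hA : Dep A F) (hB : Dep B G) (hA' : Fin' A) (hB' : Fin' B) (hd : Disjoint F G) :
    (PP ι).real {u | (fun i => f i (u i)) ∈ A ∩ B} =
      (PP ι).real {u | (fun i => f i (u i)) ∈ A} * (PP ι).real {u | (fun i => f i (u i)) ∈ B} := by
  classical
  obtain ⟨S0, hS0⟩ := hA'
  obtain ⟨T0, hT0⟩ := hB'
  have hS := hA.inter hS0
  have hT := hB.inter hT0
  let S : Finset ι := S0.filter (· ∈ F)
  let T : Finset ι := T0.filter (· ∈ G)
  have hS1 : Dep A (S : Set ι) := hS.mono (by intro e he; simp [S]; exact ⟨he.2, he.1⟩)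
  have hT1 : Dep B (T : Set ι) := hT.mono (by intro e he; simp [T]; exact ⟨he.2, he.1⟩)
  have hST : Disjoint S T := by
    rw [Finset.disjoint_left]
    intro e he he'
    simp [S] at he
    simp [T] at he'
    exact Set.disjoint_left.1 hd he.2 he'.2
  have hi := ProbabilityTheory.iIndepFun_infinitePi (P := fun _ : ι => lam) (X := f) hf
  have h2 := hi.indepFun_finset S T hST (fun i => (hf i).comp (measurable_pi_apply i))
  rw [ProbabilityTheory.indepFun_iff_measure_inter_preimage_eq_mul] at h2
  have h3 := h2 ((fun ω : ι → α => fun i : S => ω i) '' A)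
    ((fun ω : ι → α => fun i : T => ω i) '' B) (Set.toFinite _).measurableSet
    (Set.toFinite _).measurableSet
  have eA : {u : ι → ℝ | (fun i => f i (u i)) ∈ A} =
      (fun a (i : S) => f i (a i)) ⁻¹' ((fun ω : ι → α => fun i : S => ω i) '' A) := by
    conv_lhs => rw [hS1.eq_preimage]
    rfl
  have eB : {u : ι → ℝ | (fun i => f i (u i)) ∈ B} =
      (fun a (i : T) => f i (a i)) ⁻¹' ((fun ω : ι → α => fun i : T => ω i) '' B) := by
    conv_lhs => rw [hT1.eq_preimage]
    rfl
  have eAB : {u : ι → ℝ | (fun i => f i (u i)) ∈ A ∩ B} =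
      {u : ι → ℝ | (fun i => f i (u i)) ∈ A} ∩ {u : ι → ℝ | (fun i => f i (u i)) ∈ B} := rfl
  rw [eAB, eA, eB, measureReal_def, measureReal_def, measureReal_def, ← ENNReal.toReal_mul]
  congr 1

end generic

/-- configuration at levels `P` -/
noncomputable def cfg {ι : Type*} (P : ι → ℝ) (u : ι → ℝ) : ι → Bool := fun i => decide (u i < P i)

/-- probability of an event for inhomogeneous Bernoulli percolation -/
noncomputable def pr {ι : Type*} (P : ι → ℝ) (A : Set (ι → Bool)) : ℝ :=
  (PP ι).real (cfg P ⁻¹' A)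

section prob
variable {ι : Type*}

lemma meas_lt (p : ℝ) : Measurable (fun u : ℝ => decide (u < p)) := by
  refine measurable_to_bool ?_
  have : (fun u : ℝ => decide (u < p)) ⁻¹' {true} = Set.Iio p := by
    ext u; simp
  rw [this]
  exact measurableSet_Iio

lemma meas_cfg (P : ι → ℝ) : Measurable (cfg P) :=
  measurable_pi_lambda _ fun i => (meas_lt (P i)).comp (measurable_pi_apply i)

lemma pr_nonneg (P : ι → ℝ) (A : Set (ι → Bool)) : 0 ≤ pr P A := measureReal_nonneg

lemma pr_le_one (P : ι → ℝ) (A : Set (ι → Bool)) : pr P A ≤ 1 := measureReal_le_one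

lemma pr_mono (P : ι → ℝ) {A B : Set (ι → Bool)} (h : A ⊆ B) : pr P A ≤ pr P B :=
  measureReal_mono (Set.preimage_mono h)

lemma pr_mono_P {P Q : ι → ℝ} (hPQ : ∀ i, P i ≤ Q i) {A : Set (ι → Bool)} (hA : IsUpperSet A) :
    pr P A ≤ pr Q A := by
  refine measureReal_mono ?_
  intro u hu
  refine hA (a := cfg P u) ?_ hu
  intro i
  simp only [cfg, Bool.le_iff_imp, decide_eq_true_eq]
  exact fun h => h.trans_le (hPQ i)

lemma pr_compl (P : ι → ℝ) {A : Set (ι → Bool)} (h : Fin' A) : pr P Aᶜ = 1 - pr P A := by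
  unfold pr
  rw [Set.preimage_compl, probReal_compl_eq_one_sub (meas_cfg P h.meas)]

lemma pr_indep (P : ι → ℝ) {A B : Set (ι → Bool)} {F G : Set ι}
    (hA : Dep A F) (hB : Dep B G) (hA' : Fin' A) (hB' : Fin' B) (hd : Disjoint F G) :
    pr P (A ∩ B) = pr P A * pr P B :=
  indepG (fun i u => decide (u < P i)) (fun i => meas_lt (P i)) hA hB hA' hB' hd

lemma pr_union_le (P : ι → ℝ) (A B : Set (ι → Bool)) : pr P (A ∪ B) ≤ pr P A + pr P B :=
  measureReal_union_le _ _

lemma pr_biUnion_le (P : ι → ℝ) {κ : Type*} (s : Finset κ) (A : κ → Set (ι → Bool)) :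
    pr P (⋃ k ∈ s, A k) ≤ ∑ k ∈ s, pr P (A k) := by
  unfold pr
  rw [Set.preimage_iUnion₂]
  exact measureReal_biUnion_finset_le s _

lemma pr_inter_add_diff (P : ι → ℝ) (A : Set (ι → Bool)) {B : Set (ι → Bool)} (hB : Fin' B) :
    pr P (A ∩ B) + pr P (A \ B) = pr P A := by
  unfold pr
  exact measureReal_inter_add_diff (meas_cfg P hB.meas)

lemma pr_sum_disj (P : ι → ℝ) {κ : Type*} (s : Finset κ) (A : κ → Set (ι → Bool))
    (hA : ∀ k ∈ s, Fin' (A k)) (hd : ∀ k ∈ s, ∀ l ∈ s, k ≠ l → Disjoint (A k) (A l)) :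
    pr P (⋃ k ∈ s, A k) = ∑ k ∈ s, pr P (A k) := by
  unfold pr
  rw [Set.preimage_iUnion₂]
  refine measureReal_biUnion_finset ?_ ?_
  · intro k hk l hl hkl
    exact (hd k hk l hl hkl).preimage _
  · intro k hk
    exact meas_cfg P (hA k hk).meas

/-- the law of one edge -/
lemma lam_Iio {p : ℝ} (h0 : 0 ≤ p) (h1 : p ≤ 1) : lam.real (Set.Iio p) = p := by
  have : Set.Iio p ∩ Set.Ico (0:ℝ) 1 = Set.Ico 0 p := by
    ext x; simp; grind
  rw [measureReal_def, lam, Measure.restrict_apply measurableSet_Iio, this]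
  simp [h0]

lemma pr_single (P : ι → ℝ) (e : ι) (h0 : 0 ≤ P e) (h1 : P e ≤ 1) :
    pr P {ω | ω e = true} = P e := by
  unfold pr
  have : cfg P ⁻¹' {ω | ω e = true} = (fun u : ι → ℝ => u e) ⁻¹' (Set.Iio (P e)) := by
    ext u; simp [cfg]
  rw [this, measureReal_def, ← Measure.map_apply (measurable_pi_apply e) measurableSet_Iio, PP,
    Measure.infinitePi_map_eval, ← measureReal_def, lam_Iio h0 h1]

/-- reindexing along injections -/
lemma PP_map_comp {κ : Type*} (g : κ → ι) (hg : Function.Injective g) :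
    (PP ι).map (fun u => u ∘ g) = PP κ := by
  classical
  refine Measure.eq_infinitePi _ fun s t ht => ?_
  have hm : Measurable (fun u : ι → ℝ => u ∘ g) :=
    measurable_pi_lambda _ fun i => measurable_pi_apply _
  rw [Measure.map_apply hm (.pi s.countable_toSet fun _ _ => ht _)]
  have e1 : (fun u : ι → ℝ => u ∘ g) ⁻¹' ((s : Set κ).pi t) =
      Set.pi (s.image g : Finset ι) (Function.extend g t (fun _ => Set.univ)) := by
    ext u
    simp [Set.mem_pi, hg.extend_apply]
  rw [e1, PP, Measure.infinitePi_pi]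
  · rw [Finset.prod_image (fun a _ b _ h => hg h)]
    simp [hg.extend_apply]
  · intro i hi
    obtain ⟨k, hk, rfl⟩ := Finset.mem_image.1 hi
    rw [hg.extend_apply]
    exact ht k

lemma pr_comp {κ : Type*} (g : κ → ι) (hg : Function.Injective g) (P : ι → ℝ)
    {A : Set (κ → Bool)} (hA : Fin' A) :
    pr P {ω | ω ∘ g ∈ A} = pr (P ∘ g) A := by
  unfold pr
  rw [← PP_map_comp g hg, measureReal_def, measureReal_def, Measure.map_apply]
  · rfl
  · exact measurable_pi_lambda _ fun i => measurable_pi_apply _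
  · exact meas_cfg _ hA.meas

/-- flipping -/
lemma pr_flip {p : ℝ} (h0 : 0 ≤ p) (h1 : p ≤ 1)
    {A : Set (ι → Bool)} (hA : Fin' A) :
    pr (fun _ : ι => p) {ω | (fun e => !(ω e)) ∈ A} = pr (fun _ => 1 - p) A := by
  have key : (PP ι).map (fun u (i:ι) => !(decide (u i < p))) =
      (PP ι).map (cfg (fun _ => 1 - p)) := by
    have hn : Measurable (fun u : ℝ => !(decide (u < p))) :=
      (measurable_from_top (f := fun b : Bool => !b)).comp (meas_lt p)
    unfold cfg PP
    rw [Measure.infinitePi_map_pi (μ := fun _ : ι => lam) (f := fun _ u => !(decide (u < p)))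
      (fun i => hn), Measure.infinitePi_map_pi (μ := fun _ : ι => lam)
      (f := fun _ u => decide (u < 1 - p)) (fun i => meas_lt _)]
    congr 1
    funext i
    have hp1 := Measure.isProbabilityMeasure_map (μ := lam) hn.aemeasurable
    have hp2 := Measure.isProbabilityMeasure_map (μ := lam) (meas_lt (1 - p)).aemeasurable
    have ht : (lam.map (fun u : ℝ => !(decide (u < p)))).real {true} =
        (lam.map (fun u : ℝ => decide (u < 1 - p))).real {true} := by
      rw [measureReal_def, measureReal_def, Measure.map_apply hn (by simp),
        Measure.map_apply (meas_lt _) (by simp)]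
      have e1 : (fun u : ℝ => !(decide (u < p))) ⁻¹' {true} = (Set.Iio p)ᶜ := by
        ext u; simp
      have e2 : (fun u : ℝ => decide (u < 1 - p)) ⁻¹' {true} = Set.Iio (1 - p) := by
        ext u; simp
      rw [e1, e2, ← measureReal_def, ← measureReal_def,
        probReal_compl_eq_one_sub measurableSet_Iio, lam_Iio h0 h1,
        lam_Iio (by linarith) (by linarith)]
    have ht' : (lam.map (fun u : ℝ => !(decide (u < p)))) {true} =
        (lam.map (fun u : ℝ => decide (u < 1 - p))) {true} := by
      rwa [measureReal_def, measureReal_def, ENNReal.toReal_eq_toReal_iff' (by simp) (by simp)]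
        at ht
    refine Measure.ext_of_singleton ?_
    intro b
    cases b
    · have : ({false} : Set Bool) = {true}ᶜ := by ext b; cases b <;> simp
      rw [this, prob_compl_eq_one_sub (by simp), prob_compl_eq_one_sub (by simp), ht']
    · exact ht'
  unfold pr
  rw [measureReal_def, measureReal_def, ← Measure.map_apply (meas_cfg _) hA.meas, ← key,
    Measure.map_apply _ hA.meas]
  · rfl
  · exact measurable_pi_lambda _ fun i =>
      (measurable_from_top (f := fun b : Bool => !b)).comp
        ((meas_lt p).comp (measurable_pi_apply i))

end prob

/-! ### Finite sums, Harris inequality, Russo formula -/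

/-- weight of one edge -/
noncomputable def wt (p : ℝ) (b : Bool) : ℝ := if b then p else 1 - p

/-- extend a finite configuration by `false` -/
noncomputable def ext0 {ι : Type*} (F : Finset ι) (η : F → Bool) : ι → Bool := by
  classical
  exact fun e => if h : e ∈ F then η ⟨e, h⟩ else false

section
variable {ι : Type*}

lemma ext0_mem (F : Finset ι) (η : F → Bool) (e : F) : ext0 F η e = η e := by
  simp [ext0]

lemma pr_cyl (P : ι → ℝ) (hP : ∀ i, 0 ≤ P i ∧ P i ≤ 1) (F : Finset ι) (η : F → Bool) :
    pr P {ω | ∀ i : F, ω i = η i} = ∏ i : F, wt (P i) (η i) := by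
  classical
  unfold pr
  have e1 : cfg P ⁻¹' {ω | ∀ i : F, ω i = η i} =
      Set.pi (F : Set ι) (fun i => (fun u => decide (u < P i)) ⁻¹' {ext0 F η i}) := by
    ext u
    simp only [Set.mem_preimage, Set.mem_ofPred_eq, Set.mem_pi, Finset.mem_coe,
      Set.mem_singleton_iff]
    constructor
    · intro h i hi
      have := h ⟨i, hi⟩
      rw [← ext0_mem F η ⟨i, hi⟩] at this
      exact this
    · intro h i
      rw [← ext0_mem F η i]
      exact h i i.2
  rw [e1, measureReal_def, PP, Measure.infinitePi_pi]
  · rw [ENNReal.toReal_prod, ← Finset.prod_coe_sort]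
    refine Finset.prod_congr rfl fun i _ => ?_
    rw [ext0_mem, ← measureReal_def]
    cases hb : η i
    · have : (fun u => decide (u < P i)) ⁻¹' {false} = (Set.Iio (P i))ᶜ := by
        ext u; simp
      rw [this, probReal_compl_eq_one_sub measurableSet_Iio, lam_Iio (hP i).1 (hP i).2]
      simp [wt]
    · have : (fun u => decide (u < P i)) ⁻¹' {true} = (Set.Iio (P i)) := by
        ext u; simp
      rw [this, lam_Iio (hP i).1 (hP i).2]
      simp [wt]
  · intro i _
    exact meas_lt _ (by simp)

open Classical in
lemma pr_eq_sum (P : ι → ℝ) (hP : ∀ i, 0 ≤ P i ∧ P i ≤ 1) {A : Set (ι → Bool)} (F : Finset ι)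
    (hA : Dep A (F : Set ι)) :
    pr P A = ∑ η : F → Bool, (∏ i : F, wt (P i) (η i)) * (if ext0 F η ∈ A then 1 else 0) := by
  have e1 : A = ⋃ η ∈ (Finset.univ.filter (fun η : F → Bool => ext0 F η ∈ A)),
      {ω : ι → Bool | ∀ i : F, ω i = η i} := by
    ext ω
    simp only [Finset.mem_filter, Finset.mem_univ, true_and, Set.mem_iUnion, Set.mem_ofPred_eq,
      exists_prop]
    constructor
    · intro h
      refine ⟨fun i => ω i, hA (fun e he => ?_) h, fun i => rfl⟩
      rw [ext0_mem F _ ⟨e, he⟩]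
    · rintro ⟨η, h, h'⟩
      refine hA (fun e he => ?_) h
      rw [h' ⟨e, he⟩, ext0_mem F _ ⟨e, he⟩]
  conv_lhs => rw [e1]
  rw [pr_sum_disj, Finset.sum_filter]
  · refine Finset.sum_congr rfl fun η _ => ?_
    rw [pr_cyl P hP]
    split_ifs <;> simp
  · intro η _
    refine ⟨F, fun ω ω' h h' i => ?_⟩
    rw [← h i i.2, h' i]
  · intro η _ η' _ hne
    rw [Set.disjoint_left]
    intro ω h h'
    exact hne (funext fun i => (h i).symm.trans (h' i))

lemma wt_nonneg {p : ℝ} (h : 0 ≤ p ∧ p ≤ 1) (b : Bool) : 0 ≤ wt p b := by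
  unfold wt; split_ifs <;> linarith [h.1, h.2]

lemma harris (P : ι → ℝ) (hP : ∀ i, 0 ≤ P i ∧ P i ≤ 1) {A B : Set (ι → Bool)}
    (hA : IsUpperSet A) (hB : IsUpperSet B) (hA' : Fin' A) (hB' : Fin' B) :
    pr P A * pr P B ≤ pr P (A ∩ B) := by
  classical
  obtain ⟨F1, hF1⟩ := hA'
  obtain ⟨F2, hF2⟩ := hB'
  let F := F1 ∪ F2
  have h1 : Dep A (F : Set ι) := hF1.mono (by simp [F])
  have h2 : Dep B (F : Set ι) := hF2.mono (by simp [F])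
  rw [pr_eq_sum P hP F h1, pr_eq_sum P hP F h2, pr_eq_sum P hP F (h1.and h2)]
  have hmono : Monotone (ext0 F) := by
    intro η η' h e
    unfold ext0
    by_cases he : e ∈ F
    · simpa [he] using h ⟨e, he⟩
    · simp [he]
  have key := fkg (α := F → Bool) (μ := fun η => ∏ i : F, wt (P i) (η i))
    (f := fun η => if ext0 F η ∈ A then (1:ℝ) else 0)
    (g := fun η => if ext0 F η ∈ B then (1:ℝ) else 0)
    (fun η => Finset.prod_nonneg fun i _ => wt_nonneg (hP i) _)
    (fun η => by dsimp; split_ifs <;> norm_num) (fun η => by dsimp; split_ifs <;> norm_num)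
    (by
      intro η η' h
      dsimp
      split_ifs with a b
      · exact le_rfl
      · exact absurd (hA (hmono h) a) b
      · norm_num
      · norm_num)
    (by
      intro η η' h
      dsimp
      split_ifs with a b
      · exact le_rfl
      · exact absurd (hB (hmono h) a) b
      · norm_num
      · norm_num)
    (by
      intro a b
      dsimp
      rw [← Finset.prod_mul_distrib, ← Finset.prod_mul_distrib]
      refine le_of_eq (Finset.prod_congr rfl fun i _ => ?_)
      cases a i <;> cases b i <;> simp [wt, mul_comm])
  have hone : ∑ η : F → Bool, ∏ i : F, wt (P i) (η i) = 1 := by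
    have := pr_eq_sum P hP (A := Set.univ) F (fun _ _ _ _ => trivial)
    simp only [Set.mem_univ, if_true, mul_one] at this
    rw [← this]
    simp [pr]
  rw [hone, one_mul] at key
  refine key.trans (le_of_eq (Finset.sum_congr rfl fun η _ => ?_))
  by_cases a : ext0 F η ∈ A <;> by_cases b : ext0 F η ∈ B <;> simp [a, b]

/-- square root trick form -/
lemma harris_union (P : ι → ℝ) (hP : ∀ i, 0 ≤ P i ∧ P i ≤ 1) {A B : Set (ι → Bool)}
    (hA : IsUpperSet A) (hB : IsUpperSet B) (hA' : Fin' A) (hB' : Fin' B) :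
    (1 - pr P A) * (1 - pr P B) ≤ 1 - pr P (A ∪ B) := by
  have h := harris P hP hA hB hA' hB'
  have h2 : pr P (A ∪ B) + pr P (A ∩ B) = pr P A + pr P B := by
    unfold pr
    exact measureReal_union_add_inter (meas_cfg P hB'.meas)
  nlinarith

/-- pivotal (from below) event -/
def Piv (A : Set (ι → Bool)) (e : ι) : Set (ι → Bool) := by
  classical
  exact {ω | ω ∉ A ∧ Function.update ω e true ∈ A}

lemma pr_open_upper (q : ℝ) (hq : 0 ≤ q ∧ q ≤ 1) {A : Set (ι → Bool)} (hA : IsUpperSet A)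
    (hF : Fin' A) (e : ι) :
    pr (fun _ => q) (A ∩ {ω | ω e = true}) - q * pr (fun _ => q) A =
      q * pr (fun _ => q) (Piv A e) := by
  classical
  let A1 : Set (ι → Bool) := {ω | Function.update ω e true ∈ A}
  have hsub : A ⊆ A1 := by
    intro ω h
    refine hA ?_ h
    intro i
    by_cases hi : i = e
    · subst hi; simp
    · simp [hi]
  obtain ⟨F, hF'⟩ := hF
  have hD : Dep A1 ((F : Set ι) ∩ {e}ᶜ) := by
    intro ω ω' h h'
    refine hF' (fun i hi => ?_) h'
    by_cases hie : i = e
    · subst hie; simp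
    · simp [hie, h i ⟨hi, hie⟩]
  have hA1 : Fin' A1 := Fin'.of hD (F.finite_toSet.inter_of_left _)
  have h1 : A ∩ {ω | ω e = true} = A1 ∩ {ω | ω e = true} := by
    ext ω
    constructor
    · rintro ⟨h, h'⟩; exact ⟨hsub h, h'⟩
    · rintro ⟨h, h'⟩
      refine ⟨?_, h'⟩
      have : Function.update ω e true = ω := by
        rw [← h']; simp
      rw [← this]; exact h
  have hDe : Dep {ω : ι → Bool | ω e = true} {e} := by
    intro ω ω' h h'
    rw [Set.mem_ofPred_eq, ← h e rfl]; exact h'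
  rw [h1, pr_indep (fun _ => q) hD hDe hA1 (Fin'.of hDe (Set.finite_singleton e)),
    pr_single _ _ hq.1 hq.2]
  · have h2 := pr_inter_add_diff (fun _ => q) A1 (B := A) ⟨F, hF'⟩
    have h3 : A1 ∩ A = A := Set.inter_eq_right.2 hsub
    have h4 : A1 \ A = Piv A e := by
      ext ω; simp [Piv, A1, and_comm]
    rw [h3, h4] at h2
    rw [← h2]; ring
  · rw [Set.disjoint_left]; rintro i ⟨_, h⟩ h'; exact h h'

lemma russo (q : ℝ) (h0 : 0 < q) (h1 : q < 1) {A : Set (ι → Bool)} (hA : IsUpperSet A)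
    (F : Finset ι) (hF : Dep A (F : Set ι)) :
    HasDerivAt (fun q => pr (fun _ => q) A)
      ((∑ e ∈ F, pr (fun _ => q) (Piv A e)) / (1 - q)) q := by
  classical
  have hwt : ∀ b : Bool, HasDerivAt (fun q => wt q b) (if b then 1 else -1) q := by
    intro b
    cases b
    · simpa [wt] using (hasDerivAt_id q).const_sub 1
    · simpa [wt] using (hasDerivAt_id' q)
  have hG : HasDerivAt (fun q => ∑ η : F → Bool, (∏ i : F, wt q (η i)) *
      (if ext0 F η ∈ A then (1:ℝ) else 0))
      (∑ η : F → Bool, (∑ i : F, (∏ j ∈ Finset.univ.erase i, wt q (η j)) •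
        (if η i then (1:ℝ) else -1)) * (if ext0 F η ∈ A then (1:ℝ) else 0)) q := by
    refine HasDerivAt.fun_sum fun η _ => ?_
    refine HasDerivAt.mul_const ?_ _
    exact HasDerivAt.fun_finsetProd fun i _ => hwt (η i)
  have hEq : (fun q => pr (fun _ : ι => q) A) =ᶠ[nhds q] (fun q => ∑ η : F → Bool,
      (∏ i : F, wt q (η i)) * (if ext0 F η ∈ A then (1:ℝ) else 0)) := by
    filter_upwards [Ioo_mem_nhds h0 h1] with r hr
    exact pr_eq_sum (fun _ => r) (fun _ => ⟨hr.1.le, hr.2.le⟩) F hF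
  refine (hG.congr_of_eventuallyEq hEq).congr_deriv ?_
  have hP : ∀ i : ι, 0 ≤ (fun _ : ι => q) i ∧ (fun _ : ι => q) i ≤ 1 := fun _ => ⟨h0.le, h1.le⟩
  have hopen : ∀ e : F, pr (fun _ => q) (Piv A e) / (1 - q) =
      ∑ η : F → Bool, ((∏ j ∈ Finset.univ.erase e, wt q (η j)) •
        (if η e then (1:ℝ) else -1)) * (if ext0 F η ∈ A then (1:ℝ) else 0) := by
    intro e
    have a1 := pr_open_upper q ⟨h0.le, h1.le⟩ hA ⟨F, hF⟩ (e : ι)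
    have hDe : Dep {ω : ι → Bool | ω e = true} (F : Set ι) := by
      intro ω ω' h h'
      rw [Set.mem_ofPred_eq, ← h e e.2]; exact h'
    rw [pr_eq_sum _ hP F (hF.and hDe), pr_eq_sum _ hP F hF, Finset.mul_sum,
      ← Finset.sum_sub_distrib] at a1
    have hq : q * (1 - q) ≠ 0 := mul_ne_zero h0.ne' (by linarith)
    have : pr (fun _ => q) (Piv A e) / (1 - q) = (q * pr (fun _ => q) (Piv A e)) / (q * (1 - q)) := by
      field_simp
    rw [this, ← a1, Finset.sum_div]
    refine Finset.sum_congr rfl fun η _ => ?_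
    rw [← Finset.mul_prod_erase Finset.univ (fun j : F => wt q (η j)) (Finset.mem_univ e)]
    simp only [Set.mem_inter_iff, Set.mem_ofPred_eq, ext0_mem]
    have hq' : 1 - q ≠ 0 := by linarith
    have hq'' := h0.ne'
    by_cases a : ext0 F η ∈ A <;> cases hb : η e <;> simp [a, wt] <;> field_simp
  rw [Finset.sum_div, ← Finset.sum_coe_sort F]
  rw [Finset.sum_congr rfl (fun e _ => hopen e), Finset.sum_comm]
  refine Finset.sum_congr rfl fun η _ => ?_
  rw [Finset.sum_mul]

end

/-! ### Generic path lemmas -/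

section rel
variable {V : Type*}

/-- paths staying in `R` -/
def Pth (r : V → V → Prop) (R : Set V) : V → V → Prop :=
  Relation.ReflTransGen (fun a b => r a b ∧ a ∈ R ∧ b ∈ R)

lemma Pth.to_rtg {r : V → V → Prop} {R : Set V} {x y : V} (h : Pth r R x y) :
    Relation.ReflTransGen r x y :=
  Relation.ReflTransGen.mono (fun _ _ h => h.1) _ _ h

lemma Pth.mem {r : V → V → Prop} {R : Set V} {x y : V} (h : Pth r R x y) (hx : x ∈ R) : y ∈ R := by
  induction h with
  | refl => exact hx
  | tail _ h _ => exact h.2.2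

lemma Pth.mono {r s : V → V → Prop} {R S : Set V} (hrs : ∀ a b, a ∈ R → b ∈ R → r a b → s a b)
    (hRS : R ⊆ S) {x y : V} (h : Pth r R x y) : Pth s S x y :=
  Relation.ReflTransGen.mono (fun a b h => ⟨hrs a b h.2.1 h.2.2 h.1, hRS h.2.1, hRS h.2.2⟩) _ _ h

lemma Pth.symm {r : V → V → Prop} (hr : ∀ a b, r a b → r b a) {R : Set V} {x y : V}
    (h : Pth r R x y) : Pth r R y x := by
  induction h with
  | refl => exact .refl
  | tail _ h ih => exact Relation.ReflTransGen.head ⟨hr _ _ h.1, h.2.2, h.2.1⟩ ih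

lemma first_exit {r : V → V → Prop} {x y : V} (h : Relation.ReflTransGen r x y) (R : Set V)
    (hx : x ∈ R) (hy : y ∉ R) :
    ∃ z w, Pth r R x z ∧ z ∈ R ∧ w ∉ R ∧ r z w ∧ Relation.ReflTransGen r w y := by
  induction h using Relation.ReflTransGen.head_induction_on with
  | refl => exact absurd hx hy
  | @head a c hac hcy ih =>
    by_cases hc : c ∈ R
    · obtain ⟨z, w, h1, h2⟩ := ih hc
      exact ⟨z, w, Relation.ReflTransGen.head ⟨hac, hx, hc⟩ h1, h2⟩
    · exact ⟨a, c, .refl, hx, hc, hac, hcy⟩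

lemma last_exit {r : V → V → Prop} {x y : V} (h : Relation.ReflTransGen r x y) (R : Set V)
    (hx : x ∈ R) (hy : y ∉ R) :
    ∃ z w, Relation.ReflTransGen r x z ∧ z ∈ R ∧ w ∉ R ∧ r z w ∧ Pth r Rᶜ w y := by
  induction h with
  | refl => exact absurd hx hy
  | @tail b c hb hbc ih =>
    by_cases hc : b ∈ R
    · exact ⟨b, c, hb, hc, hy, hbc, .refl⟩
    · obtain ⟨z, w, h0, h1, h2, h3, h4⟩ := ih hc
      exact ⟨z, w, h0, h1, h2, h3, Relation.ReflTransGen.tail h4 ⟨hbc, hc, hy⟩⟩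

end rel

/-! ### The square lattice -/

abbrev V2 : Type := ℤ × ℤ
abbrev E2 : Type := V2 × Bool

/-- direction vectors -/
def dv (d : Bool) : V2 := if d then (0, 1) else (1, 0)

/-- edge `e` joins `x` and `y` -/
def Jn (e : E2) (x y : V2) : Prop :=
  (x = e.1 ∧ y = e.1 + dv e.2) ∨ (y = e.1 ∧ x = e.1 + dv e.2)

lemma Jn.symm {e : E2} {x y : V2} (h : Jn e x y) : Jn e y x := Or.symm h

lemma Jn.unique {e : E2} {x y x' y' : V2} (h : Jn e x y) (h' : Jn e x' y') :
    (x' = x ∧ y' = y) ∨ (x' = y ∧ y' = x) := by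
  rcases h with ⟨rfl, rfl⟩ | ⟨rfl, rfl⟩ <;> rcases h' with ⟨rfl, rfl⟩ | ⟨rfl, rfl⟩ <;> simp

lemma Jn.exists (e : E2) : ∃ x y, Jn e x y := ⟨_, _, Or.inl ⟨rfl, rfl⟩⟩

/-- open adjacency -/
def Adj (ω : E2 → Bool) (x y : V2) : Prop := ∃ e, ω e = true ∧ Jn e x y

lemma Adj.symm {ω : E2 → Bool} {x y : V2} (h : Adj ω x y) : Adj ω y x := by
  obtain ⟨e, h, h'⟩ := h
  exact ⟨e, h, h'.symm⟩

lemma Adj.mono {ω ω' : E2 → Bool} (hw : ω ≤ ω') {x y : V2} (h : Adj ω x y) : Adj ω' x y := by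
  obtain ⟨e, h, h'⟩ := h
  refine ⟨e, ?_, h'⟩
  have := hw e
  rw [h] at this
  exact Bool.eq_true_of_true_le this

/-- connection inside `R` -/
abbrev Conn (ω : E2 → Bool) (R : Set V2) : V2 → V2 → Prop := Pth (Adj ω) R

lemma Conn.mono {ω ω' : E2 → Bool} (hw : ω ≤ ω') {R S : Set V2} (hRS : R ⊆ S) {x y : V2}
    (h : Conn ω R x y) : Conn ω' S x y :=
  Pth.mono (fun _ _ _ _ h => h.mono hw) hRS h

/-- both ends in `R` -/
def Ins (R : Set V2) : Set E2 := {e | ∀ x y, Jn e x y → x ∈ R}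

/-- at least one end in `R` -/
def Tch (R : Set V2) : Set E2 := {e | ∃ x y, Jn e x y ∧ x ∈ R}

lemma mem_Ins {R : Set V2} {e : E2} {x y : V2} (h : Jn e x y) (hx : x ∈ R) (hy : y ∈ R) :
    e ∈ Ins R := by
  intro a b hab
  rcases h.unique hab with ⟨rfl, rfl⟩ | ⟨rfl, rfl⟩ <;> assumption

lemma mem_Tch {R : Set V2} {e : E2} {x y : V2} (h : Jn e x y) (hx : x ∈ R) : e ∈ Tch R :=
  ⟨x, y, h, hx⟩

lemma Ins_sub_Tch (R : Set V2) : Ins R ⊆ Tch R := by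
  intro e he
  obtain ⟨x, y, h⟩ := Jn.exists e
  exact ⟨x, y, h, he _ _ h⟩

lemma Tch_finite {R : Set V2} (hR : R.Finite) : (Tch R).Finite := by
  have : Tch R ⊆ (R ×ˢ Set.univ) ∪ (fun e : E2 => (e.1 - dv e.2, e.2)) '' (R ×ˢ Set.univ) := by
    rintro ⟨v, d⟩ ⟨x, y, h | h, hx⟩
    · left; simp only [h.1] at hx; simpa using hx
    · right
      refine ⟨(x, d), ⟨hx, trivial⟩, ?_⟩
      simp [h.2]
  exact ((hR.prod Set.finite_univ).union ((hR.prod Set.finite_univ).image _)).subset this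

lemma Ins_finite {R : Set V2} (hR : R.Finite) : (Ins R).Finite :=
  (Tch_finite hR).subset (Ins_sub_Tch R)

lemma Ins_mono {R S : Set V2} (h : R ⊆ S) : Ins R ⊆ Ins S := fun _ he x y hxy => h (he x y hxy)
lemma Tch_mono {R S : Set V2} (h : R ⊆ S) : Tch R ⊆ Tch S :=
  fun _ ⟨x, y, h1, h2⟩ => ⟨x, y, h1, h h2⟩

lemma Conn.congr {ω ω' : E2 → Bool} {R : Set V2} (hw : ∀ e ∈ Ins R, ω e = ω' e) {x y : V2}
    (h : Conn ω R x y) : Conn ω' R x y := by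
  refine Pth.mono ?_ le_rfl h
  rintro a b ha hb ⟨e, he, hj⟩
  exact ⟨e, by rw [← hw e (mem_Ins hj ha hb)]; exact he, hj⟩

lemma dep_conn (R : Set V2) (x y : V2) : Dep {ω | Conn ω R x y} (Ins R) :=
  fun _ _ hw h => Conn.congr hw h

/-- `x` exits `R` -/
def Ex (ω : E2 → Bool) (R : Set V2) (x : V2) : Prop :=
  ∃ z w, Conn ω R x z ∧ z ∈ R ∧ w ∉ R ∧ Adj ω z w

lemma Ex.head {ω : E2 → Bool} {R : Set V2} {a b : V2} (h : Ex ω R b) (hab : Adj ω a b)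
    (ha : a ∈ R) (hb : b ∈ R) : Ex ω R a := by
  obtain ⟨z, w, h1, h2⟩ := h
  exact ⟨z, w, Relation.ReflTransGen.head ⟨hab, ha, hb⟩ h1, h2⟩

lemma Ex.conn {ω : E2 → Bool} {R : Set V2} {a b : V2} (h : Ex ω R b) (hab : Conn ω R a b) :
    Ex ω R a := by
  obtain ⟨z, w, h1, h2⟩ := h
  exact ⟨z, w, Relation.ReflTransGen.trans hab h1, h2⟩

lemma Ex.mono {ω ω' : E2 → Bool} (hw : ω ≤ ω') {R : Set V2} {x : V2} (h : Ex ω R x) :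
    Ex ω' R x := by
  obtain ⟨z, w, h1, h2, h3, h4⟩ := h
  exact ⟨z, w, h1.mono hw le_rfl, h2, h3, h4.mono hw⟩

lemma Ex.to_path {ω : E2 → Bool} {R : Set V2} {x : V2} (h : Ex ω R x) :
    ∃ w, w ∉ R ∧ Relation.ReflTransGen (Adj ω) x w := by
  obtain ⟨z, w, h1, h2, h3, h4⟩ := h
  exact ⟨w, h3, h1.to_rtg.tail h4⟩

lemma Ex.of_path {ω : E2 → Bool} {R : Set V2} {x w : V2} (hx : x ∈ R) (hw : w ∉ R)
    (h : Relation.ReflTransGen (Adj ω) x w) : Ex ω R x := by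
  obtain ⟨z, w, h1, h2, h3, h4, -⟩ := first_exit h R hx hw
  exact ⟨z, w, h1, h2, h3, h4⟩

lemma Ex.anti {ω : E2 → Bool} {R S : Set V2} {x : V2} (hRS : R ⊆ S) (hx : x ∈ R) (h : Ex ω S x) :
    Ex ω R x := by
  obtain ⟨w, hw, h⟩ := h.to_path
  exact Ex.of_path hx (fun h' => hw (hRS h')) h

lemma Ex.congr {ω ω' : E2 → Bool} {R : Set V2} (hw : ∀ e ∈ Tch R, ω e = ω' e) {x : V2}
    (h : Ex ω R x) : Ex ω' R x := by
  obtain ⟨z, w, h1, h2, h3, e, h4, h5⟩ := h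
  exact ⟨z, w, h1.congr (fun e he => hw e (Ins_sub_Tch R he)), h2, h3, e,
    by rw [← hw e (mem_Tch h5 h2)]; exact h4, h5⟩

lemma dep_ex (R : Set V2) (x : V2) : Dep {ω | Ex ω R x} (Tch R) :=
  fun _ _ hw h => Ex.congr hw h

lemma up_ex (R : Set V2) (x : V2) : IsUpperSet {ω | Ex ω R x} :=
  fun _ _ hw h => Ex.mono hw h

lemma fin_ex {R : Set V2} (hR : R.Finite) (x : V2) : Fin' {ω | Ex ω R x} :=
  Fin'.of (dep_ex R x) (Tch_finite hR)

lemma fin_conn {R : Set V2} (hR : R.Finite) (x y : V2) : Fin' {ω | Conn ω R x y} :=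
  Fin'.of (dep_conn R x y) (Ins_finite hR)

/-! ### Symmetries -/

/-- `(σ, τ)` is a lattice automorphism -/
def IsSym (σ : V2 ≃ V2) (τ : E2 ≃ E2) : Prop := ∀ e x y, Jn e x y → Jn (τ e) (σ x) (σ y)

lemma IsSym.adj {σ : V2 ≃ V2} {τ : E2 ≃ E2} (h : IsSym σ τ) {ω : E2 → Bool} {x y : V2}
    (ha : Adj (ω ∘ τ) x y) : Adj ω (σ x) (σ y) := by
  obtain ⟨e, h1, h2⟩ := ha
  exact ⟨τ e, h1, h _ _ _ h2⟩

lemma IsSym.symm {σ : V2 ≃ V2} {τ : E2 ≃ E2} (h : IsSym σ τ) : IsSym σ.symm τ.symm := by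
  intro e x y hxy
  obtain ⟨e, rfl⟩ := τ.surjective e
  obtain ⟨x, rfl⟩ := σ.surjective x
  obtain ⟨y, rfl⟩ := σ.surjective y
  obtain ⟨a, b, hab⟩ := Jn.exists e
  have := (h _ _ _ hab)
  simp only [Equiv.symm_apply_apply]
  rcases this.unique hxy with ⟨h1, h2⟩ | ⟨h1, h2⟩
  · rw [σ.injective h1, σ.injective h2]; exact hab
  · rw [σ.injective h1, σ.injective h2]; exact hab.symm

lemma IsSym.adj_iff {σ : V2 ≃ V2} {τ : E2 ≃ E2} (h : IsSym σ τ) {ω : E2 → Bool} {x y : V2} :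
    Adj (ω ∘ τ) x y ↔ Adj ω (σ x) (σ y) := by
  refine ⟨h.adj, fun h' => ?_⟩
  have : Adj ((ω ∘ τ) ∘ τ.symm) (σ x) (σ y) := by
    convert h' using 1
    ext e; simp
  simpa using h.symm.adj this

lemma IsSym.conn {σ : V2 ≃ V2} {τ : E2 ≃ E2} (h : IsSym σ τ) {ω : E2 → Bool} {R : Set V2}
    {x y : V2} (hc : Conn (ω ∘ τ) (σ ⁻¹' R) x y) : Conn ω R (σ x) (σ y) := by
  induction hc with
  | refl => exact .refl
  | tail _ h' ih => exact Relation.ReflTransGen.tail ih ⟨h.adj h'.1, h'.2.1, h'.2.2⟩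

lemma IsSym.conn_iff {σ : V2 ≃ V2} {τ : E2 ≃ E2} (h : IsSym σ τ) {ω : E2 → Bool} {R : Set V2}
    {x y : V2} : Conn (ω ∘ τ) (σ ⁻¹' R) x y ↔ Conn ω R (σ x) (σ y) := by
  refine ⟨h.conn, fun h' => ?_⟩
  have : Conn ((ω ∘ τ) ∘ τ.symm) (σ.symm ⁻¹' (σ ⁻¹' R)) (σ x) (σ y) := by
    convert h' using 1
    · ext e; simp
    · ext e; simp
  simpa using h.symm.conn this

/-- translation -/
def trV (a : V2) : V2 ≃ V2 := Equiv.addRight a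
def trE (a : V2) : E2 ≃ E2 := (Equiv.addRight a).prodCongr (Equiv.refl _)

lemma isSym_tr (a : V2) : IsSym (trV a) (trE a) := by
  rintro ⟨v, d⟩ x y (⟨rfl, rfl⟩ | ⟨rfl, rfl⟩)
  · left; simp [trV, trE]; abel
  · right; simp [trV, trE]; abel

/-- box -/
def Bx (c : V2) (n : ℤ) : Set V2 := {v | |v.1 - c.1| ≤ n ∧ |v.2 - c.2| ≤ n}

lemma mem_Bx {c v : V2} {n : ℤ} : v ∈ Bx c n ↔
    (c.1 - n ≤ v.1 ∧ v.1 ≤ c.1 + n) ∧ (c.2 - n ≤ v.2 ∧ v.2 ≤ c.2 + n) := by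
  simp only [Bx, Set.mem_ofPred_eq, abs_le]
  constructor
  · rintro ⟨⟨_, _⟩, ⟨_, _⟩⟩; refine ⟨⟨?_, ?_⟩, ⟨?_, ?_⟩⟩ <;> linarith
  · rintro ⟨⟨_, _⟩, ⟨_, _⟩⟩; refine ⟨⟨?_, ?_⟩, ⟨?_, ?_⟩⟩ <;> linarith

lemma Bx_finite (c : V2) (n : ℤ) : (Bx c n).Finite := by
  refine ((Set.finite_Icc (c.1 - n) (c.1 + n)).prod (Set.finite_Icc (c.2 - n) (c.2 + n))).subset ?_
  intro v hv
  rw [mem_Bx] at hv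
  exact ⟨hv.1, hv.2⟩

lemma self_mem_Bx (c : V2) {n : ℤ} (hn : 0 ≤ n) : c ∈ Bx c n := by simp [Bx, hn]

lemma Bx_mono (c : V2) {m n : ℤ} (h : m ≤ n) : Bx c m ⊆ Bx c n :=
  fun _ hv => ⟨hv.1.trans h, hv.2.trans h⟩

lemma Jn.close {e : E2} {x y : V2} (h : Jn e x y) : y ∈ Bx x 1 := by
  rcases h with ⟨rfl, rfl⟩ | ⟨rfl, rfl⟩ <;> rw [mem_Bx] <;> cases e.2 <;> simp [dv] <;> omega

lemma trV_preimage_Bx (a c : V2) (n : ℤ) : trV a ⁻¹' (Bx (c + a) n) = Bx c n := by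
  ext v; simp [trV, Bx]

lemma pr_sym (p : ℝ) (τ : E2 ≃ E2) {A : Set (E2 → Bool)} (hA : Fin' A) :
    pr (fun _ : E2 => p) {ω | ω ∘ τ ∈ A} = pr (fun _ => p) A :=
  pr_comp τ τ.injective (fun _ => p) hA

lemma IsSym.ex_iff {σ : V2 ≃ V2} {τ : E2 ≃ E2} (h : IsSym σ τ) {ω : E2 → Bool} {R : Set V2}
    {x : V2} : Ex (ω ∘ τ) (σ ⁻¹' R) x ↔ Ex ω R (σ x) := by
  constructor
  · rintro ⟨z, w, h1, h2, h3, h4⟩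
    exact ⟨σ z, σ w, h.conn h1, h2, h3, h.adj h4⟩
  · rintro ⟨z, w, h1, h2, h3, h4⟩
    obtain ⟨z, rfl⟩ := σ.surjective z
    obtain ⟨w, rfl⟩ := σ.surjective w
    exact ⟨z, w, h.conn_iff.2 h1, h2, h3, h.adj_iff.2 h4⟩

/-- one-arm probability -/
noncomputable def th (p : ℝ) (n : ℤ) : ℝ := pr (fun _ => p) {ω | Ex ω (Bx 0 n) 0}

lemma th_tr (p : ℝ) (n : ℤ) (c : V2) : pr (fun _ => p) {ω | Ex ω (Bx c n) c} = th p n := by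
  unfold th
  rw [← pr_sym p (trE c) (fin_ex (Bx_finite 0 n) 0)]
  congr 1
  ext ω
  simp only [Set.mem_ofPred_eq]
  have h := (isSym_tr c).ex_iff (ω := ω) (R := Bx c n) (x := 0)
  rw [show trV c ⁻¹' (Bx c n) = Bx 0 n by simpa using trV_preimage_Bx c 0 n,
    show trV c 0 = c by simp [trV]] at h
  exact h.symm

/-! ### The Duminil-Copin and Tassion argument -/

/-- edge `e` on the boundary of `S` is reached from `0` inside `S` -/
def Rea (S : Set V2) (e : E2) : Set (E2 → Bool) :=
  {ω | ∃ x y, Jn e x y ∧ x ∈ S ∧ y ∉ S ∧ Conn ω S 0 x}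

lemma dep_rea (S : Set V2) (e : E2) : Dep (Rea S e) (Ins S) := by
  rintro ω ω' hw ⟨x, y, h1, h2, h3, h4⟩
  exact ⟨x, y, h1, h2, h3, h4.congr hw⟩

lemma fin_rea {S : Set V2} (hS : S.Finite) (e : E2) : Fin' (Rea S e) :=
  Fin'.of (dep_rea S e) (Ins_finite hS)

lemma up_rea (S : Set V2) (e : E2) : IsUpperSet (Rea S e) := by
  rintro ω ω' hw ⟨x, y, h1, h2, h3, h4⟩
  exact ⟨x, y, h1, h2, h3, h4.mono hw le_rfl⟩

/-- finset of edges touching `S` -/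
noncomputable def TF (S : Finset V2) : Finset E2 := (Tch_finite S.finite_toSet).toFinset

lemma mem_TF {S : Finset V2} {e : E2} : e ∈ TF S ↔ e ∈ Tch (S : Set V2) := by simp [TF]

noncomputable def phi (p : ℝ) (S : Finset V2) : ℝ :=
  ∑ e ∈ TF S, p * pr (fun _ => p) (Rea S e)

lemma phi_mono {p q : ℝ} (hp : 0 ≤ p) (hpq : p ≤ q) (S : Finset V2) : phi p S ≤ phi q S := by
  refine Finset.sum_le_sum fun e _ => ?_
  exact mul_le_mul hpq (pr_mono_P (fun _ => hpq) (up_rea _ e)) (pr_nonneg _ _) (hp.trans hpq)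

/-- the cluster of `0` in `S` equals `C` -/
def ClEv (S C : Set V2) : Set (E2 → Bool) := {ω | ∀ v, Conn ω S 0 v ↔ v ∈ C}

lemma dep_clEv (S C : Set V2) : Dep (ClEv S C) (Ins S ∩ Tch C) := by
  intro ω ω' hw h v
  have step : ∀ a b, a ∈ C → a ∈ S → b ∈ S → (Adj ω a b ↔ Adj ω' a b) := by
    intro a b ha haS hbS
    constructor
    · rintro ⟨e, h1, h2⟩
      exact ⟨e, by rw [← hw e ⟨mem_Ins h2 haS hbS, mem_Tch h2 ha⟩]; exact h1, h2⟩
    · rintro ⟨e, h1, h2⟩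
      exact ⟨e, by rw [hw e ⟨mem_Ins h2 haS hbS, mem_Tch h2 ha⟩]; exact h1, h2⟩
  constructor
  · intro hc
    induction hc with
    | refl => exact (h 0).1 .refl
    | @tail b c _ hbc ih =>
      exact (h c).1 (Relation.ReflTransGen.tail ((h b).2 ih)
        ⟨(step b c ih hbc.2.1 hbc.2.2).2 hbc.1, hbc.2⟩)
  · intro hv
    have hc := (h v).2 hv
    clear hv
    induction hc with
    | refl => exact .refl
    | @tail b c hb hbc ih =>
      exact Relation.ReflTransGen.tail ih
        ⟨(step b c ((h b).1 hb) hbc.2.1 hbc.2.2).1 hbc.1, hbc.2⟩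

lemma fin_clEv {S : Set V2} (hS : S.Finite) (C : Set V2) : Fin' (ClEv S C) :=
  Fin'.of (dep_clEv S C) ((Ins_finite hS).subset inter_subset_left)

/-- close all the edges in `K` -/
noncomputable def mask (K : Set E2) (ω : E2 → Bool) : E2 → Bool := by
  classical
  exact fun e => if e ∈ K then false else ω e

lemma mask_le (K : Set E2) (ω : E2 → Bool) : mask K ω ≤ ω := by
  intro e
  unfold mask
  split_ifs <;> simp

lemma mask_congr {K : Set E2} {ω ω' : E2 → Bool} (h : ∀ e ∈ Kᶜ, ω e = ω' e) :
    mask K ω = mask K ω' := by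
  ext e
  by_cases he : e ∈ K
  · simp [mask, he]
  · simp [mask, he, h e he]

lemma mask_agree {K F : Set E2} {ω ω' : E2 → Bool} (h : ∀ e ∈ F, ω e = ω' e) :
    ∀ e ∈ F, mask K ω e = mask K ω' e := by
  intro e he
  simp [mask, h e he]

lemma adj_mask {C : Set V2} {ω : E2 → Bool} {a b : V2} (h : Adj ω a b) (ha : a ∈ Cᶜ) (hb : b ∈ Cᶜ) :
    Adj (mask (Tch C) ω) a b := by
  obtain ⟨e, h1, h2⟩ := h
  refine ⟨e, ?_, h2⟩
  have : e ∉ Tch C := by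
    rintro ⟨x, y, h3, h4⟩
    rcases h2.unique h3 with ⟨rfl, rfl⟩ | ⟨rfl, rfl⟩
    · exact ha h4
    · exact hb h4
  simp [mask, this, h1]

lemma dct_decay {p : ℝ} (h0 : 0 ≤ p) (h1 : p ≤ 1) {S : Finset V2} (h0S : (0 : V2) ∈ S) {L : ℤ}
    (hS : (S : Set V2) ⊆ Bx 0 L) {n : ℤ} (hn : 0 ≤ n) :
    th p (n + L + 1) ≤ phi p S * th p n := by
  classical
  let D : Set V2 → V2 → Set (E2 → Bool) := fun C y => {ω | Ex (mask (Tch C) ω) (Bx y n) y}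
  have hDdep : ∀ C y, Dep (D C y) (Tch C)ᶜ := by
    intro C y ω ω' hw h
    change Ex (mask (Tch C) ω') (Bx y n) y
    rw [← mask_congr hw]
    exact h
  have hDfin : ∀ C y, Fin' (D C y) := by
    intro C y
    refine Fin'.of (F := Tch (Bx y n)) ?_ (Tch_finite (Bx_finite _ _))
    intro ω ω' hw h
    exact Ex.congr (mask_agree hw) h
  have hDle : ∀ C y, pr (fun _ => p) (D C y) ≤ th p n := by
    intro C y
    rw [← th_tr p n y]
    exact pr_mono _ fun ω h => Ex.mono (mask_le _ ω) h
  let W : Finset V2 → E2 → Set (E2 → Bool) := fun C e =>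
    {ω | ω ∈ ClEv S C ∧ ω e = true ∧ ∃ x y, Jn e x y ∧ x ∈ C ∧ y ∉ S ∧ ω ∈ D C y}
  have hW : ∀ C ∈ S.powerset, ∀ e, pr (fun _ => p) (W C e) ≤
      pr (fun _ => p) (ClEv S C ∩ Rea S e) * (p * th p n) := by
    intro C hC e
    rw [Finset.mem_powerset] at hC
    by_cases hxy : ∃ x y, Jn e x y ∧ x ∈ C ∧ y ∉ S
    · obtain ⟨x, y, hj, hx, hy⟩ := hxy
      have e1 : W C e ⊆ ClEv S C ∩ ({ω | ω e = true} ∩ D C y) := by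
        rintro ω ⟨h1, h2, x', y', h3, h4, h5, h6⟩
        rcases hj.unique h3 with ⟨rfl, rfl⟩ | ⟨rfl, rfl⟩
        · exact ⟨h1, h2, h6⟩
        · exact absurd (hC h4) hy
      have e2 : ClEv S C ⊆ ClEv S C ∩ Rea S e := by
        intro ω h
        exact ⟨h, x, y, hj, hC hx, hy, (h x).2 hx⟩
      have dE : Dep {ω : E2 → Bool | ω e = true} {e} := by
        intro ω ω' hw h
        have := hw e rfl
        simpa [← this] using h
      have fE : Fin' {ω : E2 → Bool | ω e = true} := Fin'.of dE (Set.finite_singleton e)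
      have eT : e ∈ Tch (C : Set V2) := mem_Tch hj hx
      have eI : e ∉ Ins (S : Set V2) := fun h => hy (h _ _ hj.symm)
      have i1 : pr (fun _ => p) ({ω | ω e = true} ∩ D C y) = p * pr (fun _ => p) (D C y) := by
        rw [pr_indep _ dE (hDdep C y) fE (hDfin C y), pr_single _ _ h0 h1]
        rw [Set.disjoint_singleton_left]
        exact fun h => h eT
      have dB : Dep ({ω | ω e = true} ∩ D C y) (insert e (Tch (C : Set V2))ᶜ) :=
        (dE.mono (by simp)).and ((hDdep C y).mono (by simp))
      have i2 : pr (fun _ => p) (ClEv S C ∩ ({ω | ω e = true} ∩ D C y)) =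
          pr (fun _ => p) (ClEv S C) * (p * pr (fun _ => p) (D C y)) := by
        rw [pr_indep _ (dep_clEv S C) dB (fin_clEv S.finite_toSet _) (fE.inter (hDfin C y)), i1]
        rw [Set.disjoint_left]
        rintro f ⟨hf1, hf2⟩ hf3
        rcases hf3 with rfl | hf3
        · exact eI hf1
        · exact hf3 hf2
      calc pr (fun _ => p) (W C e) ≤ _ := pr_mono _ e1
        _ = _ := i2
        _ ≤ _ := by
          refine mul_le_mul (pr_mono _ e2) (mul_le_mul_of_nonneg_left (hDle _ _) h0)
            (mul_nonneg h0 (pr_nonneg _ _)) (pr_nonneg _ _)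
    · have : W C e = ∅ := by
        rw [Set.eq_empty_iff_forall_notMem]
        rintro ω ⟨h1, h2, x', y', h3, h4, h5, h6⟩
        exact hxy ⟨x', y', h3, h4, h5⟩
      rw [this]
      have : pr (fun _ : E2 => p) ∅ = 0 := by simp [pr]
      rw [this]
      exact mul_nonneg (pr_nonneg _ _) (mul_nonneg h0 (pr_nonneg _ _))
  have hsub : {ω | Ex ω (Bx 0 (n + L + 1)) 0} ⊆ ⋃ e ∈ TF S, ⋃ C ∈ S.powerset, W C e := by
    intro ω hω
    obtain ⟨w, hw, hpath⟩ := Ex.to_path hω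
    let C : Finset V2 := S.filter (fun v => Conn ω S 0 v)
    have hCl : ω ∈ ClEv S C := by
      intro v
      simp only [C, Finset.coe_filter, Set.mem_ofPred_eq]
      refine ⟨fun h => ⟨?_, h⟩, fun h => h.2⟩
      exact Pth.mem h h0S
    have hLn : (S : Set V2) ⊆ Bx 0 (n + L + 1) := hS.trans (Bx_mono _ (by omega))
    have h0C : (0 : V2) ∈ (C : Set V2) := (hCl 0).1 .refl
    have hwC : w ∉ (C : Set V2) := fun h => hw (hLn (Finset.mem_filter.1 h).1)
    obtain ⟨x, y, -, hx, hy, hxy, hpy⟩ := last_exit hpath (C : Set V2) h0C hwC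
    have hxS : x ∈ S := (Finset.mem_filter.1 hx).1
    have hyS : y ∉ S := by
      intro hyS
      refine hy ((hCl y).1 (Relation.ReflTransGen.tail ((hCl x).2 hx) ⟨hxy, hxS, hyS⟩))
    obtain ⟨e, he, hj⟩ := hxy
    simp only [Set.mem_iUnion]
    refine ⟨e, mem_TF.2 (mem_Tch hj hxS), C, by simp [C], hCl, he, x, y, hj, hx, hyS, ?_⟩
    refine Ex.of_path (self_mem_Bx y hn) (w := w) ?_ ?_
    · intro hwy
      have hyc := hj.close
      have hxL := hS hxS
      rw [mem_Bx] at hwy hyc hxL hw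
      simp at hwy hyc hxL hw
      omega
    · exact Relation.ReflTransGen.mono (fun a b h => adj_mask h.1 h.2.1 h.2.2) _ _ hpy
  unfold th
  calc pr (fun _ => p) {ω | Ex ω (Bx 0 (n + L + 1)) 0}
      ≤ pr (fun _ => p) (⋃ e ∈ TF S, ⋃ C ∈ S.powerset, W C e) := pr_mono _ hsub
    _ ≤ ∑ e ∈ TF S, pr (fun _ => p) (⋃ C ∈ S.powerset, W C e) := pr_biUnion_le _ _ _
    _ ≤ ∑ e ∈ TF S, ∑ C ∈ S.powerset, pr (fun _ => p) (W C e) :=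
        Finset.sum_le_sum fun e _ => pr_biUnion_le _ _ _
    _ ≤ ∑ e ∈ TF S, ∑ C ∈ S.powerset, pr (fun _ => p) (ClEv S C ∩ Rea S e) * (p * th p n) :=
        Finset.sum_le_sum fun e _ => Finset.sum_le_sum fun C hC => hW C hC e
    _ = ∑ e ∈ TF S, pr (fun _ => p) (⋃ C ∈ S.powerset, ClEv S C ∩ Rea S e) * (p * th p n) := by
        refine Finset.sum_congr rfl fun e _ => ?_
        rw [pr_sum_disj, Finset.sum_mul]
        · intro C _
          exact (fin_clEv S.finite_toSet _).inter (fin_rea S.finite_toSet e)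
        · intro C _ C' _ hCC
          rw [Set.disjoint_left]
          rintro ω ⟨h1, -⟩ ⟨h2, -⟩
          apply hCC
          ext v
          exact (h1 v).symm.trans (h2 v)
    _ ≤ ∑ e ∈ TF S, pr (fun _ => p) (Rea S e) * (p * th p n) := by
        refine Finset.sum_le_sum fun e _ => ?_
        refine mul_le_mul_of_nonneg_right (pr_mono _ ?_) (mul_nonneg h0 (pr_nonneg _ _))
        intro ω h
        simp only [Set.mem_iUnion] at h
        obtain ⟨_, _, h⟩ := h
        exact h.2
    _ = phi p S * th p n := by
        rw [phi, Finset.sum_mul]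
        exact Finset.sum_congr rfl fun e _ => by ring

/-! second half -/

/-- the set of points not exiting `B` equals `S` -/
def NxEv (B S : Set V2) : Set (E2 → Bool) := {ω | ∀ v ∈ B, (¬ Ex ω B v) ↔ v ∈ S}

lemma dep_nxEv {B S : Set V2} (hSB : S ⊆ B) : Dep (NxEv B S) (Tch B ∩ (Ins S)ᶜ) := by
  intro ω ω' hw h
  have step : ∀ a b, (a ∉ S ∨ b ∉ S) → (a ∈ B) → (Adj ω a b ↔ Adj ω' a b) := by
    intro a b hab haB
    have : ∀ e, Jn e a b → ω e = ω' e := by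
      intro e he
      refine hw e ⟨mem_Tch he haB, fun hI => ?_⟩
      rcases hab with ha | hb
      · exact ha (hI _ _ he)
      · exact hb (hI _ _ he.symm)
    constructor
    · rintro ⟨e, h1, h2⟩
      exact ⟨e, by rw [← this e h2]; exact h1, h2⟩
    · rintro ⟨e, h1, h2⟩
      exact ⟨e, by rw [this e h2]; exact h1, h2⟩
  -- exits agree
  have key : ∀ v ∈ B, Ex ω B v ↔ Ex ω' B v := by
    intro v hv
    constructor
    · rintro ⟨z, w, h1, h2, h3, h4⟩
      have hz : z ∉ S := fun hz => (h z h2).2 hz ⟨z, w, .refl, h2, h3, h4⟩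
      have hE' : Ex ω' B z := ⟨z, w, .refl, h2, h3, (step z w (Or.inl hz) h2).1 h4⟩
      have hE : Ex ω B z := ⟨z, w, .refl, h2, h3, h4⟩
      clear hv
      induction h1 using Relation.ReflTransGen.head_induction_on with
      | refl => exact hE'
      | @head a c hac hcz ih =>
        have hEc : Ex ω B c := hE.conn hcz
        have hc : c ∉ S := fun hc => (h c hac.2.2).2 hc hEc
        exact ih.head ((step a c (Or.inr hc) hac.2.1).1 hac.1) hac.2.1 hac.2.2
    · rintro ⟨z, w, h1, h2, h3, h4⟩
      have hE : Ex ω B z := ⟨z, w, .refl, h2, h3, (step z w (Or.inr fun h => h3 (hSB h)) h2).2 h4⟩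
      clear hv
      induction h1 using Relation.ReflTransGen.head_induction_on with
      | refl => exact hE
      | @head a c hac hcz ih =>
        have hc : c ∉ S := fun hc => (h c hac.2.2).2 hc ih
        exact ih.head ((step a c (Or.inr hc) hac.2.1).2 hac.1) hac.2.1 hac.2.2
  intro v hv
  rw [← key v hv]
  exact h v hv

lemma piv_sum {p : ℝ} (h0 : 0 < p) (h1 : p < 1)
    (hphi : ∀ S : Finset V2, (0 : V2) ∈ S → 1 ≤ phi p S) {n : ℤ} (hn : 0 ≤ n)
    (F : Finset E2) (hF : (F : Set E2) = Tch (Bx 0 n)) :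
    1 - th p n ≤ p * ∑ e ∈ F, pr (fun _ => p) (Piv {ω | Ex ω (Bx 0 n) 0} e) := by
  classical
  set A : Set (E2 → Bool) := {ω | Ex ω (Bx 0 n) 0} with hA
  set B : Finset V2 := (Bx_finite 0 n).toFinset with hB
  have hBc : (B : Set V2) = Bx 0 n := by simp [hB]
  let Q : Finset (Finset V2) := B.powerset.filter (fun S => (0 : V2) ∈ S)
  have hQ : ∀ S ∈ Q, (S : Set V2) ⊆ Bx 0 n ∧ (0 : V2) ∈ S := by
    intro S hS
    obtain ⟨h1, h2⟩ := Finset.mem_filter.1 hS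
    refine ⟨?_, h2⟩
    rw [← hBc]
    exact_mod_cast Finset.mem_powerset.1 h1
  have hfin : ∀ S ∈ Q, Fin' (NxEv (Bx 0 n) (S : Set V2)) := fun S hS =>
    Fin'.of (dep_nxEv (hQ S hS).1) ((Tch_finite (Bx_finite 0 n)).subset inter_subset_left)
  have hdisj : ∀ S ∈ Q, ∀ S' ∈ Q, S ≠ S' →
      Disjoint (NxEv (Bx 0 n) (S : Set V2)) (NxEv (Bx 0 n) (S' : Set V2)) := by
    intro S hS S' hS' hne
    rw [Set.disjoint_left]
    intro ω h1 h2
    apply hne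
    ext v
    constructor
    · intro hv
      have hvB := (hQ S hS).1 hv
      exact (h2 v hvB).1 ((h1 v hvB).2 hv)
    · intro hv
      have hvB := (hQ S' hS').1 hv
      exact (h1 v hvB).1 ((h2 v hvB).2 hv)
  have hsum : 1 - th p n ≤ ∑ S ∈ Q, pr (fun _ => p) (NxEv (Bx 0 n) (S : Set V2)) := by
    have hAf : Fin' A := fin_ex (Bx_finite 0 n) 0
    rw [th, ← hA, ← pr_compl _ hAf]
    rw [← pr_sum_disj _ _ _ hfin hdisj]
    refine pr_mono _ fun ω hω => ?_
    simp only [Set.mem_iUnion]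
    refine ⟨B.filter (fun v => ¬ Ex ω (Bx 0 n) v), ?_, ?_⟩
    · simp only [Q, Finset.mem_filter, Finset.mem_powerset]
      refine ⟨Finset.filter_subset _ _, ?_, hω⟩
      rw [← Finset.mem_coe, hBc]; exact self_mem_Bx 0 hn
    · intro v hv
      rw [← hBc] at hv
      simp only [Finset.coe_filter, Set.mem_ofPred_eq]
      exact ⟨fun h => ⟨hv, h⟩, fun h => h.2⟩
  have hpiv : ∀ S ∈ Q, ∀ e, NxEv (Bx 0 n) (S : Set V2) ∩ Rea S e ⊆ Piv A e := by
    rintro S hS e ω ⟨h1, x, y, hj, hx, hy, hc⟩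
    obtain ⟨hSB, h0S⟩ := hQ S hS
    refine ⟨(h1 0 (hSB h0S)).2 h0S, ?_⟩
    suffices hgoal : Ex (Function.update ω e true) (Bx 0 n) 0 by
      change Ex _ (Bx 0 n) 0
      convert hgoal
    have hup : ω ≤ Function.update ω e true := by
      intro f
      by_cases hf : f = e
      · subst hf; simp [Bool.le_true]
      · simp [hf]
    have hcx : Conn (Function.update ω e true) (Bx 0 n) 0 x := hc.mono hup hSB
    have hadj : Adj (Function.update ω e true) x y := ⟨e, by simp, hj⟩
    by_cases hyB : y ∈ Bx 0 n
    · have : Ex ω (Bx 0 n) y := by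
        by_contra h
        exact hy ((h1 y hyB).1 h)
      exact Ex.conn ((this.mono hup).head hadj (hSB hx) hyB) hcx
    · exact ⟨x, y, hcx, hSB hx, hyB, hadj⟩
  have hpe : ∀ e, ∑ S ∈ Q, pr (fun _ => p) (NxEv (Bx 0 n) (S : Set V2)) * pr (fun _ => p) (Rea S e)
      ≤ pr (fun _ => p) (Piv A e) := by
    intro e
    have : ∀ S ∈ Q, pr (fun _ => p) (NxEv (Bx 0 n) (S : Set V2)) * pr (fun _ => p) (Rea S e) =
        pr (fun _ => p) (NxEv (Bx 0 n) (S : Set V2) ∩ Rea S e) := by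
      intro S hS
      rw [pr_indep _ (dep_nxEv (hQ S hS).1) (dep_rea S e) (hfin S hS) (fin_rea S.finite_toSet e)]
      rw [Set.disjoint_left]
      exact fun f hf hf' => hf.2 hf'
    rw [Finset.sum_congr rfl this, ← pr_sum_disj]
    · refine pr_mono _ ?_
      exact Set.iUnion₂_subset fun S hS => hpiv S hS e
    · exact fun S hS => (hfin S hS).inter (fin_rea S.finite_toSet e)
    · exact fun S hS S' hS' hne => (hdisj S hS S' hS' hne).mono inter_subset_left inter_subset_left
  have hTF : ∀ S ∈ Q, TF S ⊆ F := by
    intro S hS e he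
    rw [mem_TF] at he
    rw [← Finset.mem_coe, hF]
    exact Tch_mono (hQ S hS).1 he
  calc 1 - th p n ≤ ∑ S ∈ Q, pr (fun _ => p) (NxEv (Bx 0 n) (S : Set V2)) := hsum
    _ ≤ ∑ S ∈ Q, pr (fun _ => p) (NxEv (Bx 0 n) (S : Set V2)) *
          (∑ e ∈ F, p * pr (fun _ => p) (Rea S e)) := by
        refine Finset.sum_le_sum fun S hS => ?_
        refine le_mul_of_one_le_right (pr_nonneg _ _) ((hphi S (hQ S hS).2).trans ?_)
        exact Finset.sum_le_sum_of_subset_of_nonneg (hTF S hS)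
          fun e _ _ => mul_nonneg h0.le (pr_nonneg _ _)
    _ = p * ∑ e ∈ F, ∑ S ∈ Q,
          pr (fun _ => p) (NxEv (Bx 0 n) (S : Set V2)) * pr (fun _ => p) (Rea S e) := by
        rw [Finset.sum_comm, Finset.mul_sum]
        refine Finset.sum_congr rfl fun S _ => ?_
        rw [Finset.mul_sum, Finset.mul_sum]
        exact Finset.sum_congr rfl fun e _ => by ring
    _ ≤ _ := mul_le_mul_of_nonneg_left (Finset.sum_le_sum fun e _ => hpe e) h0.le

lemma dct_lower {p q : ℝ} (h0 : 0 < p) (hpq : p < q) (h1 : q < 1)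
    (hphi : ∀ S : Finset V2, (0 : V2) ∈ S → 1 ≤ phi p S) {n : ℤ} (hn : 0 ≤ n) :
    1 - Real.exp (-(q - p)) ≤ th q n := by
  set F : Finset E2 := (Tch_finite (Bx_finite 0 n)).toFinset with hFd
  have hF : (F : Set E2) = Tch (Bx 0 n) := by simp [hFd]
  set A : Set (E2 → Bool) := {ω | Ex ω (Bx 0 n) 0} with hA
  have hder : ∀ r, 0 < r → r < 1 → HasDerivAt (fun r => th r n)
      ((∑ e ∈ F, pr (fun _ => r) (Piv A e)) / (1 - r)) r := by
    intro r hr0 hr1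
    exact russo r hr0 hr1 (up_ex _ _) F (by rw [hF]; exact dep_ex _ _)
  have hg : ∀ r, 0 < r → r < 1 → HasDerivAt (fun r => (1 - th r n) * Real.exp r)
      ((0 - (∑ e ∈ F, pr (fun _ => r) (Piv A e)) / (1 - r)) * Real.exp r
        + (1 - th r n) * Real.exp r) r := by
    intro r hr0 hr1
    exact ((hasDerivAt_const r (1:ℝ)).sub (hder r hr0 hr1)).mul (Real.hasDerivAt_exp r)
  have hanti : AntitoneOn (fun r => (1 - th r n) * Real.exp r) (Set.Icc p q) := by
    refine antitoneOn_of_deriv_nonpos (convex_Icc p q) ?_ ?_ ?_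
    · intro r hr
      exact (hg r (by linarith [hr.1]) (by linarith [hr.2])).continuousAt.continuousWithinAt
    · intro r hr
      rw [interior_Icc] at hr
      exact (hg r (by linarith [hr.1]) (by linarith [hr.2])).differentiableAt.differentiableWithinAt
    · intro r hr
      rw [interior_Icc] at hr
      have hr0 : 0 < r := by linarith [hr.1]
      have hr1 : r < 1 := by linarith [hr.2]
      rw [(hg r hr0 hr1).deriv]
      have hps := piv_sum hr0 hr1 (fun S hS => (hphi S hS).trans (phi_mono h0.le hr.1.le S)) hn F hF
      set X := ∑ e ∈ F, pr (fun _ => r) (Piv A e) with hX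
      have hX0 : 0 ≤ X := Finset.sum_nonneg fun e _ => pr_nonneg _ _
      have : X ≤ X / (1 - r) := by
        rw [le_div_iff₀ (by linarith)]
        nlinarith
      have h3 : 1 - th r n ≤ X / (1 - r) := by nlinarith
      have := Real.exp_pos r
      nlinarith
  have := hanti (Set.left_mem_Icc.2 hpq.le) (Set.right_mem_Icc.2 hpq.le) hpq.le
  simp only at this
  have hp1 : 0 ≤ th p n := pr_nonneg _ _
  have e1 : Real.exp p = Real.exp q * Real.exp (-(q - p)) := by
    rw [← Real.exp_add]; congr 1; ring
  have hq := Real.exp_pos q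
  have hpp := Real.exp_pos p
  have : (1 - th q n) * Real.exp q ≤ Real.exp (-(q-p)) * Real.exp q := by
    nlinarith
  have := le_of_mul_le_mul_right this hq
  linarith

/-! ### A finite-volume zero-one law -/

/-- some point of the box of radius `m` exits `R` -/
def XS (c : V2) (m : ℤ) (R : Set V2) : Set (E2 → Bool) := {ω | ∃ x ∈ Bx c m, Ex ω R x}

lemma dep_XS (c : V2) (m : ℤ) (R : Set V2) : Dep (XS c m R) (Tch R) := by
  rintro ω ω' hw ⟨x, hx, h⟩
  exact ⟨x, hx, h.congr hw⟩

lemma fin_XS (c : V2) (m : ℤ) {R : Set V2} (hR : R.Finite) : Fin' (XS c m R) :=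
  Fin'.of (dep_XS c m R) (Tch_finite hR)

lemma pr_XS_tr (p : ℝ) (c : V2) (m n : ℤ) :
    pr (fun _ => p) (XS c m (Bx c n)) = pr (fun _ => p) (XS 0 m (Bx 0 n)) := by
  rw [← pr_sym p (trE c) (fin_XS 0 m (Bx_finite 0 n))]
  congr 1
  ext ω
  simp only [XS, Set.mem_ofPred_eq]
  have e : trV c ⁻¹' (Bx c n) = Bx 0 n := by simpa using trV_preimage_Bx c 0 n
  have e' : trV c ⁻¹' (Bx c m) = Bx 0 m := by simpa using trV_preimage_Bx c 0 m
  constructor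
  · rintro ⟨x, hx, h⟩
    obtain ⟨x, rfl⟩ := (trV c).surjective x
    refine ⟨x, by rw [← e']; exact hx, ?_⟩
    rw [← e]
    exact (isSym_tr c).ex_iff.2 h
  · rintro ⟨x, hx, h⟩
    refine ⟨trV c x, by rw [← e'] at hx; exact hx, ?_⟩
    rw [← e] at h
    exact (isSym_tr c).ex_iff.1 h

lemma XS_mono {c c' : V2} {m m' : ℤ} {R R' : Set V2} (h : Bx c m ⊆ Bx c' m') (hR : R' ⊆ R)
    (hm : Bx c m ⊆ R') : XS c m R ⊆ XS c' m' R' := by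
  rintro ω ⟨x, hx, h'⟩
  exact ⟨x, h hx, h'.anti hR (hm hx)⟩

lemma zero_one {p c : ℝ} (hc : 0 < c) (hth : ∀ n : ℕ, c ≤ th p n) {ε : ℝ} (hε : 0 < ε) :
    ∃ m : ℕ, ∀ n : ℕ, m ≤ n → 1 - ε ≤ pr (fun _ => p) (XS 0 m (Bx 0 n)) := by
  set g : ℕ → ℕ → ℝ := fun m n => pr (fun _ => p) (XS 0 m (Bx 0 n)) with hg
  let T : Set ℝ := {t | ∃ m : ℕ, ∀ n : ℕ, m ≤ n → t ≤ g m n}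
  have hT1 : ∀ t ∈ T, t ≤ 1 := by
    rintro t ⟨m, h⟩
    exact (h m le_rfl).trans (pr_le_one _ _)
  have hbdd : BddAbove T := ⟨1, hT1⟩
  have hcT : c ∈ T := by
    refine ⟨0, fun n _ => (hth n).trans ?_⟩
    refine pr_mono _ fun ω h => ⟨0, self_mem_Bx 0 (by simp), h⟩
  set a := sSup T with ha
  have hca : c ≤ a := le_csSup hbdd hcT
  have ha1 : a ≤ 1 := csSup_le ⟨c, hcT⟩ hT1
  have hlow : ∀ t, t < a → t ∈ T := by
    intro t ht
    obtain ⟨t', ⟨m, h⟩, htt⟩ := exists_lt_of_lt_csSup ⟨c, hcT⟩ ht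
    exact ⟨m, fun n hn => htt.le.trans (h n hn)⟩
  have hupp : ∀ t, a < t → ∀ m : ℕ, ∃ n : ℕ, m ≤ n ∧ g m n < t := by
    intro t ht m
    by_contra! h
    exact absurd (le_csSup hbdd (show t ∈ T from ⟨m, h⟩)) (not_le.2 ht)
  have key : a = 1 := by
    by_contra hne
    have ha1' : a < 1 := lt_of_le_of_ne ha1 hne
    set δ := a * (1 - a) / 16 with hδ
    have hδ0 : 0 < δ := by
      have : 0 < a * (1 - a) := mul_pos (by linarith) (by linarith)
      positivity
    obtain ⟨m, hm⟩ := hlow (a - δ) (by linarith)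
    obtain ⟨n1, hmn1, hn1⟩ := hupp (a + δ) (by linarith) m
    let s : ℕ := 3 * n1 + 3
    let v : V2 := ((s : ℤ), 0)
    let M : ℕ := 5 * n1 + 5
    obtain ⟨n2, hMn2, hn2⟩ := hupp (a + δ) (by linarith) M
    let C : Set (E2 → Bool) := XS 0 m (Bx 0 n1)
    let C' : Set (E2 → Bool) := XS v m (Bx v n1)
    let D : Set (E2 → Bool) := XS 0 M (Bx 0 n2)
    let F : Set (E2 → Bool) := XS 0 m (Bx 0 n2)
    let F' : Set (E2 → Bool) := XS v m (Bx 0 n2)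
    have hmn1' : (m : ℤ) ≤ n1 := by exact_mod_cast hmn1
    have hMn2' : (M : ℤ) ≤ n2 := by exact_mod_cast hMn2
    have hMv : (M : ℤ) = 5 * n1 + 5 := by simp [M]
    have hsv : (s : ℤ) = 3 * n1 + 3 := by simp [s]
    have hF : a - δ ≤ pr (fun _ => p) F := hm n2 (by omega)
    have hF' : a - δ ≤ pr (fun _ => p) F' := by
      refine (hm (n2 + s) (by omega)).trans ?_
      change pr _ _ ≤ _
      rw [← pr_XS_tr p v]
      refine pr_mono _ (XS_mono le_rfl ?_ ?_)
      · intro w hw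
        rw [mem_Bx] at hw ⊢
        simp [v] at hw ⊢
        omega
      · intro w hw
        rw [mem_Bx] at hw ⊢
        simp [v] at hw ⊢
        omega
    have hFD : F ⊆ D := XS_mono (Bx_mono _ (by omega)) le_rfl (Bx_mono _ (by omega))
    have hFD' : F' ⊆ D := by
      refine XS_mono ?_ le_rfl ?_ <;>
      · intro w hw
        rw [mem_Bx] at hw ⊢
        simp [v] at hw ⊢
        omega
    have hFC : F ⊆ C := XS_mono le_rfl (Bx_mono _ (by omega)) (Bx_mono _ (by omega))
    have hFC' : F' ⊆ C' := by
      refine XS_mono le_rfl ?_ (Bx_mono _ (by omega))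
      intro w hw
      rw [mem_Bx] at hw ⊢
      simp [v] at hw ⊢
      omega
    have hC : pr (fun _ => p) C < a + δ := hn1
    have hC' : pr (fun _ => p) C' < a + δ := by rw [pr_XS_tr]; exact hn1
    have hD : pr (fun _ => p) D < a + δ := hn2
    have finF : Fin' F := fin_XS _ _ (Bx_finite _ _)
    have finF' : Fin' F' := fin_XS _ _ (Bx_finite _ _)
    have hind : pr (fun _ => p) (C ∩ C') = pr (fun _ => p) C * pr (fun _ => p) C' := by
      refine pr_indep _ (dep_XS _ _ _) (dep_XS _ _ _) (fin_XS _ _ (Bx_finite _ _))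
        (fin_XS _ _ (Bx_finite _ _)) ?_
      rw [Set.disjoint_left]
      rintro e ⟨x, y, hj, hx⟩ ⟨x', y', hj', hx'⟩
      have hcl := hj.close
      have hcl' := hj.symm.close
      rcases hj.unique hj' with ⟨rfl, rfl⟩ | ⟨rfl, rfl⟩ <;>
      · rw [mem_Bx] at hx hx' hcl hcl'
        simp [v] at hx hx' hcl hcl'
        omega
    have h1 := pr_inter_add_diff (fun _ => p) D finF
    have h2 := pr_inter_add_diff (fun _ => p) D finF'
    have h3 := pr_inter_add_diff (fun _ => p) F finF'
    have h4 : pr (fun _ => p) (F \ F') ≤ pr (fun _ => p) (D \ F') :=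
      pr_mono _ (Set.sdiff_subset_sdiff_left hFD)
    rw [Set.inter_eq_self_of_subset_right hFD'] at h2
    have h5 : pr (fun _ => p) (F ∩ F') ≤ pr (fun _ => p) (C ∩ C') :=
      pr_mono _ (Set.inter_subset_inter hFC hFC')
    have h6 : pr (fun _ => p) C * pr (fun _ => p) C' ≤ (a + δ) * (a + δ) :=
      mul_le_mul hC.le hC'.le (pr_nonneg _ _) (by linarith)
    have h7 : a - 3 * δ ≤ (a + δ) * (a + δ) := by linarith
    have h8 : a - a * a = 16 * δ := by rw [hδ]; ring
    have h9 : δ ≤ 1 := by nlinarith [mul_self_nonneg a]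
    have h10 : a * δ ≤ 1 * δ := mul_le_mul_of_nonneg_right ha1 hδ0.le
    have h11 : δ * δ ≤ 1 * δ := mul_le_mul_of_nonneg_right h9 hδ0.le
    have h12 : (a + δ) * (a + δ) = a * a + 2 * (a * δ) + δ * δ := by ring
    linarith
  obtain ⟨m, hm⟩ := hlow (1 - ε) (by linarith)
  exact ⟨m, hm⟩

/-! ### The square root trick -/

/-- the four sides -/
def Zs (i : Fin 4) (c : V2) (n : ℤ) : Set V2 :=
  match i with
  | 0 => {w | w.1 = c.1 + n + 1}
  | 1 => {w | w.2 = c.2 + n + 1}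
  | 2 => {w | w.1 = c.1 - n - 1}
  | 3 => {w | w.2 = c.2 - n - 1}

def ArmE (c : V2) (m n : ℤ) (Z : Set V2) : Set (E2 → Bool) :=
  {ω | ∃ x ∈ Bx c m, ∃ z ∈ Bx c n, ∃ w ∈ Z, Conn ω (Bx c n) x z ∧ Adj ω z w}

lemma dep_arm (c : V2) (m n : ℤ) (Z : Set V2) : Dep (ArmE c m n Z) (Tch (Bx c n)) := by
  rintro ω ω' hw ⟨x, hx, z, hz, w, hw', h1, e, h2, h3⟩
  exact ⟨x, hx, z, hz, w, hw', h1.congr (fun e he => hw e (Ins_sub_Tch _ he)), e,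
    by rw [← hw e (mem_Tch h3 hz)]; exact h2, h3⟩

lemma fin_arm (c : V2) (m n : ℤ) (Z : Set V2) : Fin' (ArmE c m n Z) :=
  Fin'.of (dep_arm c m n Z) (Tch_finite (Bx_finite c n))

lemma up_arm (c : V2) (m n : ℤ) (Z : Set V2) : IsUpperSet (ArmE c m n Z) := by
  rintro ω ω' hw ⟨x, hx, z, hz, w, hw', h1, h2⟩
  exact ⟨x, hx, z, hz, w, hw', h1.mono hw le_rfl, h2.mono hw⟩

lemma pr_arm_sym (p : ℝ) {σ : V2 ≃ V2} {τ : E2 ≃ E2} (h : IsSym σ τ) {c c' : V2} {m n : ℤ}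
    {Z Z' : Set V2} (hm : σ ⁻¹' (Bx c' m) = Bx c m) (hn : σ ⁻¹' (Bx c' n) = Bx c n)
    (hZ : σ ⁻¹' Z' = Z) :
    pr (fun _ => p) (ArmE c' m n Z') = pr (fun _ => p) (ArmE c m n Z) := by
  rw [← pr_sym p τ (fin_arm c m n Z)]
  congr 1
  ext ω
  simp only [ArmE, Set.mem_ofPred_eq]
  constructor
  · rintro ⟨x, hx, z, hz, w, hw, h1, h2⟩
    obtain ⟨x, rfl⟩ := σ.surjective x
    obtain ⟨z, rfl⟩ := σ.surjective z
    obtain ⟨w, rfl⟩ := σ.surjective w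
    refine ⟨x, by rw [← hm]; exact hx, z, by rw [← hn]; exact hz, w, by rw [← hZ]; exact hw, ?_,
      h.adj_iff.2 h2⟩
    rw [← hn]
    exact h.conn_iff.2 h1
  · rintro ⟨x, hx, z, hz, w, hw, h1, h2⟩
    rw [← hn] at hz h1
    rw [← hm] at hx
    rw [← hZ] at hw
    exact ⟨σ x, hx, σ z, hz, σ w, hw, h.conn_iff.1 h1, h.adj_iff.1 h2⟩

/-- rotation by a quarter turn -/
def rotV : V2 ≃ V2 where
  toFun v := (-v.2, v.1)
  invFun v := (v.2, -v.1)
  left_inv v := by simp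
  right_inv v := by simp

def rotE : E2 ≃ E2 where
  toFun e := if e.2 then ((-e.1.2 - 1, e.1.1), false) else ((-e.1.2, e.1.1), true)
  invFun e := if e.2 then ((e.1.2, -e.1.1), false) else ((e.1.2, -e.1.1 - 1), true)
  left_inv := by rintro ⟨⟨a, b⟩, d⟩; cases d <;> simp
  right_inv := by rintro ⟨⟨a, b⟩, d⟩; cases d <;> simp

lemma isSym_rot : IsSym rotV rotE := by
  rintro ⟨⟨a, b⟩, d⟩ x y (⟨rfl, rfl⟩ | ⟨rfl, rfl⟩) <;> cases d
  · left; simp [rotV, rotE, dv]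
  · right; simp [rotV, rotE, dv]; omega
  · right; simp [rotV, rotE, dv]
  · left; simp [rotV, rotE, dv]; omega

lemma rot_Bx (n : ℤ) : rotV ⁻¹' (Bx 0 n) = Bx 0 n := by
  ext ⟨a, b⟩
  simp [Bx, rotV]
  tauto

lemma arm_bound {p : ℝ} (h0 : 0 ≤ p) (h1 : p ≤ 1) {m n : ℕ} {ε : ℝ} (hε0 : 0 ≤ ε)
    (h : 1 - ε ^ 4 ≤ pr (fun _ => p) (XS 0 m (Bx 0 n))) (c : V2) (i : Fin 4) :
    1 - ε ≤ pr (fun _ => p) (ArmE c m n (Zs i c n)) := by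
  have htr : pr (fun _ => p) (ArmE c m n (Zs i c n)) = pr (fun _ => p) (ArmE 0 m n (Zs i 0 n)) := by
    refine pr_arm_sym p (isSym_tr c) (by simpa using trV_preimage_Bx c 0 m)
      (by simpa using trV_preimage_Bx c 0 n) ?_
    ext ⟨a, b⟩
    fin_cases i <;> simp [Zs, trV] <;> omega
  have hr : ∀ i : Fin 4, pr (fun _ => p) (ArmE 0 m n (Zs (i+1) 0 n)) =
      pr (fun _ => p) (ArmE 0 m n (Zs i 0 n)) := by
    intro i
    refine pr_arm_sym p isSym_rot (rot_Bx _) (rot_Bx _) ?_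
    ext ⟨a, b⟩
    fin_cases i <;> simp [Zs, rotV] <;> omega
  have e1 := hr 0
  have e2 := hr 1
  have e3 := hr 2
  simp only [zero_add, show (1:Fin 4) + 1 = 2 by rfl, show (2:Fin 4) + 1 = 3 by rfl] at e1 e2 e3
  set r := pr (fun _ => p) (ArmE 0 m n (Zs 0 0 n)) with hrdef
  have hall : pr (fun _ => p) (ArmE 0 m n (Zs i 0 n)) = r := by
    fin_cases i
    · rfl
    · exact e1
    · exact e2.trans e1
    · exact e3.trans (e2.trans e1)
  rw [htr, hall]
  have hP : ∀ i : E2, 0 ≤ (fun _ : E2 => p) i ∧ (fun _ : E2 => p) i ≤ 1 := fun _ => ⟨h0, h1⟩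
  set A : Fin 4 → Set (E2 → Bool) := fun i => ArmE 0 m n (Zs i 0 n) with hA
  have hAu : ∀ i, IsUpperSet (A i) := fun i => up_arm _ _ _ _
  have hAf : ∀ i, Fin' (A i) := fun i => fin_arm _ _ _ _
  have u1 := harris_union (fun _ => p) hP (hAu 0) (hAu 1) (hAf 0) (hAf 1)
  have u2 := harris_union (fun _ => p) hP (hAu 2) (hAu 3) (hAf 2) (hAf 3)
  have u3 := harris_union (fun _ => p) hP ((hAu 0).union (hAu 1)) ((hAu 2).union (hAu 3))
    ((hAf 0).union (hAf 1)) ((hAf 2).union (hAf 3))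
  have hsub : XS 0 m (Bx 0 n) ⊆ (A 0 ∪ A 1) ∪ (A 2 ∪ A 3) := by
    rintro ω ⟨x, hx, z, w, h1, hz, hw, hzw⟩
    have : w ∈ Zs 0 0 n ∨ w ∈ Zs 1 0 n ∨ w ∈ Zs 2 0 n ∨ w ∈ Zs 3 0 n := by
      obtain ⟨e, -, hj⟩ := hzw
      have hcl := hj.close
      rw [mem_Bx] at hcl hz hw
      simp [Zs] at hcl hz hw ⊢
      omega
    rcases this with h | h | h | h
    · exact Or.inl (Or.inl ⟨x, hx, z, hz, w, h, h1, hzw⟩)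
    · exact Or.inl (Or.inr ⟨x, hx, z, hz, w, h, h1, hzw⟩)
    · exact Or.inr (Or.inl ⟨x, hx, z, hz, w, h, h1, hzw⟩)
    · exact Or.inr (Or.inr ⟨x, hx, z, hz, w, h, h1, hzw⟩)
  have h5 := h.trans (pr_mono _ hsub)
  have r0 : pr (fun _ => p) (A 0) = r := rfl
  have r1 : pr (fun _ => p) (A 1) = r := e1
  have r2 : pr (fun _ => p) (A 2) = r := e2.trans e1
  have r3 : pr (fun _ => p) (A 3) = r := e3.trans (e2.trans e1)
  rw [r0, r1] at u1
  rw [r2, r3] at u2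
  have hr1 : r ≤ 1 := pr_le_one _ _
  have h6 : ((1 - r) * (1 - r)) * ((1 - r) * (1 - r)) ≤ ε ^ 4 := by
    have : ((1 - r) * (1 - r)) * ((1 - r) * (1 - r)) ≤
        (1 - pr (fun _ => p) (A 0 ∪ A 1)) * (1 - pr (fun _ => p) (A 2 ∪ A 3)) := by
      refine mul_le_mul u1 u2 (mul_self_nonneg _) ?_
      linarith [pr_le_one (fun _ : E2 => p) (A 0 ∪ A 1)]
    linarith
  have h7 : (1 - r) ^ 4 ≤ ε ^ 4 := by linarith [show (1 - r) ^ 4 = ((1 - r) * (1 - r)) * ((1 - r) * (1 - r)) by ring]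
  have h8 : 1 - r ≤ ε := le_of_pow_le_pow_left₀ (by norm_num) hε0 h7
  linarith

/-! ### Planar duality -/

/-- the primal edge crossed by a dual edge; the dual vertex `(a,b)` is the face with
lower left corner `(a,b)` -/
def star : E2 ≃ E2 where
  toFun e := if e.2 then ((e.1.1, e.1.2 + 1), false) else ((e.1.1 + 1, e.1.2), true)
  invFun e := if e.2 then ((e.1.1 - 1, e.1.2), false) else ((e.1.1, e.1.2 - 1), true)
  left_inv := by rintro ⟨⟨a, b⟩, d⟩; cases d <;> simp
  right_inv := by rintro ⟨⟨a, b⟩, d⟩; cases d <;> simp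

/-- dual configuration -/
def du (ω : E2 → Bool) : E2 → Bool := fun f => !(ω (star f))

lemma dual_cases {ω : E2 → Bool} {f g : V2} (h : Adj (du ω) f g) :
    (g.2 = f.2 ∧ g.1 = f.1 + 1 ∧ ω ((g.1, f.2), true) = false) ∨
    (g.2 = f.2 ∧ f.1 = g.1 + 1 ∧ ω ((f.1, f.2), true) = false) ∨
    (g.1 = f.1 ∧ g.2 = f.2 + 1 ∧ ω ((f.1, g.2), false) = false) ∨
    (g.1 = f.1 ∧ f.2 = g.2 + 1 ∧ ω ((f.1, f.2), false) = false) := by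
  obtain ⟨⟨⟨a, b⟩, d⟩, ho, ⟨rfl, rfl⟩ | ⟨rfl, rfl⟩⟩ := h <;> cases d <;>
    simp [du, star, dv] at ho ⊢ <;> simp [ho]

lemma primal_cases {ω : E2 → Bool} {x y : V2} (h : Adj ω x y) :
    (y.2 = x.2 ∧ y.1 = x.1 + 1 ∧ ω ((x.1, x.2), false) = true) ∨
    (y.2 = x.2 ∧ x.1 = y.1 + 1 ∧ ω ((y.1, y.2), false) = true) ∨
    (y.1 = x.1 ∧ y.2 = x.2 + 1 ∧ ω ((x.1, x.2), true) = true) ∨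
    (y.1 = x.1 ∧ x.2 = y.2 + 1 ∧ ω ((y.1, y.2), true) = true) := by
  obtain ⟨⟨⟨a, b⟩, d⟩, ho, ⟨rfl, rfl⟩ | ⟨rfl, rfl⟩⟩ := h <;> cases d <;>
    simp [dv] at ho ⊢ <;> simp [ho]

/-- height function of a dual path -/
lemma height {ω : E2 → Bool} {x0 x1 : ℤ} {s t : V2}
    (h : Conn (du ω) {f | x0 ≤ f.1 ∧ f.1 < x1} s t) :
    ∃ H : ℤ → ℤ → ℤ,
      (∀ x y, ω ((x, y), false) = true → H x y = H (x + 1) y) ∧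
      (∀ x y, ω ((x, y), true) = true → H x y - H x (y + 1) =
        (if t.2 = y ∧ t.1 < x then 1 else 0) - (if s.2 = y ∧ s.1 < x then 1 else 0)) ∧
      (∀ x y, x ≤ x0 → H x y = 0) ∧
      (∀ x y, x1 ≤ x → H x y = (if y ≤ t.2 then 1 else 0) - (if y ≤ s.2 then 1 else 0)) := by
  induction h with
  | refl => exact ⟨fun _ _ => 0, by simp, by simp, by simp, by simp⟩
  | @tail f g _ hfg ih =>
    obtain ⟨H, h1, h2, h3, h4⟩ := ih
    obtain ⟨hadj, ⟨hf0, hf1⟩, ⟨hg0, hg1⟩⟩ := hfg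
    have hd := dual_cases hadj
    obtain ⟨f1, f2⟩ := f
    obtain ⟨g1, g2⟩ := g
    simp only at hf0 hf1 hg0 hg1 hd h2 h4
    refine ⟨fun x y => H x y +
      (if f1 < x then (if y ≤ g2 then 1 else 0) - (if y ≤ f2 then 1 else 0) else 0), ?_, ?_, ?_, ?_⟩
    · intro x y hxy
      simp only
      rw [h1 x y hxy]
      by_cases hx : f1 = x
      · subst hx
        rcases hd with ⟨a, b, c⟩ | ⟨a, b, c⟩ | ⟨a, b, c⟩ | ⟨a, b, c⟩
        · simp [a]
        · simp [a]
        · have : y ≠ g2 := by rintro rfl; simp [hxy] at c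
          have : y ≤ g2 ↔ y ≤ f2 := by omega
          simp [this]
        · have : y ≠ f2 := by rintro rfl; simp [hxy] at c
          have : y ≤ g2 ↔ y ≤ f2 := by omega
          simp [this]
      · have : f1 < x ↔ f1 < x + 1 := by omega
        simp [this]
    · intro x y hxy
      simp only
      have := h2 x y hxy
      have key : (if f1 < x then ((if y ≤ g2 then 1 else 0) - (if y ≤ f2 then 1 else 0) : ℤ) else 0)
        - (if f1 < x then ((if y + 1 ≤ g2 then 1 else 0) - (if y + 1 ≤ f2 then 1 else 0) : ℤ) else 0)
        = (if g2 = y ∧ g1 < x then 1 else 0) - (if f2 = y ∧ f1 < x then 1 else 0) := by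
        rcases hd with ⟨a, b, c⟩ | ⟨a, b, c⟩ | ⟨a, b, c⟩ | ⟨a, b, c⟩
        · have : ¬ (f2 = y ∧ g1 = x) := by rintro ⟨rfl, rfl⟩; simp [hxy] at c
          split_ifs <;> omega
        · have : ¬ (f2 = y ∧ f1 = x) := by rintro ⟨rfl, rfl⟩; simp [hxy] at c
          split_ifs <;> omega
        · split_ifs <;> omega
        · split_ifs <;> omega
      linarith
    · intro x y hx
      simp only
      rw [h3 x y hx, if_neg (show ¬ f1 < x by omega)]; simp
    · intro x y hx
      simp only
      rw [h4 x y hx, if_pos (show f1 < x by omega)]; ring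

/-- a primal left-right path and a dual top-bottom path cannot coexist -/
lemma topo {ω : E2 → Bool} {x0 x1 y0 y1 : ℤ} {u v s t : V2}
    (hp : Conn ω {w | y0 ≤ w.2 ∧ w.2 ≤ y1} u v) (hu : y0 ≤ u.2 ∧ u.2 ≤ y1)
    (hu0 : u.1 ≤ x0) (hv1 : x1 ≤ v.1)
    (hd : Conn (du ω) {f | x0 ≤ f.1 ∧ f.1 < x1} s t) (hs : y1 ≤ s.2) (ht : t.2 < y0) : False := by
  obtain ⟨H, h1, h2, h3, h4⟩ := height hd
  have hv : y0 ≤ v.2 ∧ v.2 ≤ y1 :=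
    Pth.mem (R := {w : V2 | y0 ≤ w.2 ∧ w.2 ≤ y1}) hp hu
  have key : H u.1 u.2 = H v.1 v.2 := by
    clear hv1 hu hu0 hv
    induction hp with
    | refl => rfl
    | @tail a b _ hab ih =>
      obtain ⟨hadj, ⟨ha0, ha1⟩, ⟨hb0, hb1⟩⟩ := hab
      rw [ih]
      obtain ⟨a1, a2⟩ := a
      obtain ⟨b1, b2⟩ := b
      have := primal_cases hadj
      simp only at this ha0 ha1 hb0 hb1 ⊢
      rcases this with ⟨rfl, rfl, c⟩ | ⟨rfl, rfl, c⟩ | ⟨rfl, rfl, c⟩ | ⟨rfl, rfl, c⟩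
      · exact h1 _ _ c
      · exact (h1 _ _ c).symm
      · have := h2 _ _ c
        rw [if_neg (by omega), if_neg (by omega)] at this
        linarith
      · have := h2 _ _ c
        rw [if_neg (by omega), if_neg (by omega)] at this
        linarith
  rw [h3 _ _ hu0, h4 _ _ hv1, if_neg (by omega), if_pos (by omega)] at key
  norm_num at key

/-- a box with all its edges open is connected -/
lemma box_conn {ω : E2 → Bool} {c : V2} {M : ℤ} (h : ∀ e ∈ Ins (Bx c M), ω e = true) {x y : V2}
    (hx : x ∈ Bx c M) (hy : y ∈ Bx c M) : Conn ω (Bx c M) x y := by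
  have hor : ∀ (k : ℕ) (a b : ℤ), (a, b) ∈ Bx c M → (a + k, b) ∈ Bx c M →
      Conn ω (Bx c M) (a, b) (a + k, b) := by
    intro k
    induction k with
    | zero => intro a b _ _; simp only [Nat.cast_zero, add_zero]; exact Relation.ReflTransGen.refl
    | succ k ih =>
      intro a b h1 h2
      have h3 : (a + k, b) ∈ Bx c M := by
        rw [mem_Bx] at h1 h2 ⊢; simp at h1 h2 ⊢; omega
      have hj : Jn ((a + k, b), false) (a + k, b) (a + (k+1 : ℕ), b) := by
        left; simp [dv]; ring
      exact Relation.ReflTransGen.tail (ih a b h1 h3) ⟨⟨_, h _ (mem_Ins hj h3 h2), hj⟩, h3, h2⟩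
  have ver : ∀ (k : ℕ) (a b : ℤ), (a, b) ∈ Bx c M → (a, b + k) ∈ Bx c M →
      Conn ω (Bx c M) (a, b) (a, b + k) := by
    intro k
    induction k with
    | zero => intro a b _ _; simp only [Nat.cast_zero, add_zero]; exact Relation.ReflTransGen.refl
    | succ k ih =>
      intro a b h1 h2
      have h3 : (a, b + k) ∈ Bx c M := by
        rw [mem_Bx] at h1 h2 ⊢; simp at h1 h2 ⊢; omega
      have hj : Jn ((a, b + k), true) (a, b + k) (a, b + (k+1 : ℕ)) := by
        left; simp [dv]; ring
      exact Relation.ReflTransGen.tail (ih a b h1 h3) ⟨⟨_, h _ (mem_Ins hj h3 h2), hj⟩, h3, h2⟩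
  have hsymm : ∀ a b, Conn ω (Bx c M) a b → Conn ω (Bx c M) b a :=
    fun a b h => Pth.symm (fun _ _ h => h.symm) h
  obtain ⟨x1, x2⟩ := x
  obtain ⟨y1, y2⟩ := y
  have hm : (y1, x2) ∈ Bx c M := by
    rw [mem_Bx] at hx hy ⊢; exact ⟨hy.1, hx.2⟩
  have s1 : Conn ω (Bx c M) (x1, x2) (y1, x2) := by
    rcases le_total x1 y1 with hle | hle
    · have := hor (y1 - x1).toNat x1 x2 hx
      rw [show x1 + ((y1 - x1).toNat : ℤ) = y1 by omega] at this
      exact this hm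
    · have := hor (x1 - y1).toNat y1 x2 hm
      rw [show y1 + ((x1 - y1).toNat : ℤ) = x1 by omega] at this
      exact hsymm _ _ (this hx)
  have s2 : Conn ω (Bx c M) (y1, x2) (y1, y2) := by
    rcases le_total x2 y2 with hle | hle
    · have := ver (y2 - x2).toNat y1 x2 hm
      rw [show x2 + ((y2 - x2).toNat : ℤ) = y2 by omega] at this
      exact this hy
    · have := ver (x2 - y2).toNat y1 y2 hy
      rw [show y2 + ((x2 - y2).toNat : ℤ) = x2 by omega] at this
      exact hsymm _ _ (this hm)
  exact Relation.ReflTransGen.trans s1 s2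

lemma star_ins {c : V2} {m M : ℤ} (h : m + 1 ≤ M) {f : E2} (hf : f ∈ Ins (Bx c m)) :
    star f ∈ Ins (Bx c M) := by
  have h1 := hf _ _ (Or.inl ⟨rfl, rfl⟩)
  have h2 := hf _ _ (Or.inr ⟨rfl, rfl⟩)
  obtain ⟨⟨a, b⟩, d⟩ := f
  have hj : Jn (star ((a, b), d)) (star ((a, b), d)).1 ((star ((a,b),d)).1 + dv (star ((a,b),d)).2) :=
    Or.inl ⟨rfl, rfl⟩
  refine mem_Ins hj ?_ ?_ <;>
  · rw [mem_Bx] at h1 h2 ⊢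
    cases d <;> simp [star, dv] at h1 h2 ⊢ <;> omega

/-- extraction: an arm of `ω1` leaves the block and continues in `ω0` -/
lemma arm_extract {ω0 ω1 : E2 → Bool} {c : V2} {m M n : ℤ} (hmM : m ≤ M) (hMn : M ≤ n)
    (hag : ∀ e, e ∉ Ins (Bx c M) → ω1 e = ω0 e) {Z : Set V2} (hZ : ∀ w ∈ Z, w ∉ Bx c n)
    (h : ω1 ∈ ArmE c m n Z) :
    ∃ z ∈ Bx c M, ∃ z' ∈ Bx c n, ∃ w ∈ Z, Conn ω0 (Bx c n) z z' ∧ Adj ω0 z' w := by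
  obtain ⟨x, hx, z', hz', w, hw, hc, hadj⟩ := h
  have hxM : x ∈ Bx c M := Bx_mono c hmM hx
  have hout : ∀ a b, b ∉ Bx c M → Adj ω1 a b → Adj ω0 a b := by
    rintro a b hb ⟨e, he, hj⟩
    exact ⟨e, by rw [← hag e (fun hI => hb (hI _ _ hj.symm))]; exact he, hj⟩
  have hwM : w ∉ Bx c M := fun h => hZ w hw (Bx_mono c hMn h)
  by_cases hzM : z' ∈ Bx c M
  · exact ⟨z', hzM, z', hz', w, hw, .refl, hout _ _ hwM hadj⟩
  · obtain ⟨z, y, -, hz, hy, ⟨hzy, hzn, hyn⟩, hp⟩ := last_exit hc (Bx c M) hxM hzM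
    refine ⟨z, hz, z', hz', w, hw, ?_, hout _ _ hwM hadj⟩
    refine Relation.ReflTransGen.head ⟨hout _ _ hy hzy, hzn, hyn⟩ ?_
    exact Relation.ReflTransGen.mono (fun a b h => ⟨hout a b h.2.2 h.1.1, h.1.2⟩) _ _ hp

/-- the deterministic heart of the block argument -/
lemma block_det {ω0 ω1 : E2 → Bool} {c : V2} {m M N n : ℤ} (hm : 0 ≤ m) (hmM : m + 1 ≤ M)
    (hag : ∀ e, e ∉ Ins (Bx c M) → ω1 e = ω0 e)
    (h0 : ∀ e ∈ Ins (Bx c M), ω0 e = false) (h1 : ∀ e ∈ Ins (Bx c M), ω1 e = true)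
    (hcN : Bx c M ⊆ Bx 0 N) (hn : 2 * N ≤ n)
    (aR : ω1 ∈ ArmE c m n (Zs 0 c n)) (aL : ω1 ∈ ArmE c m n (Zs 2 c n))
    (aT : du ω0 ∈ ArmE c m n (Zs 1 c n)) (aB : du ω0 ∈ ArmE c m n (Zs 3 c n)) :
    ∃ a b, a ∈ Bx 0 N ∧ b ∈ Bx 0 N ∧ a ∉ Bx 0 (N - 1) ∧ b ∉ Bx 0 (N - 1) ∧
      ¬ Conn ω0 (Bx 0 N) a b ∧ Conn ω1 (Bx 0 N) a b := by
  have hle : ω0 ≤ ω1 := by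
    intro e
    by_cases he : e ∈ Ins (Bx c M)
    · rw [h0 e he]; simp
    · rw [hag e he]
  have hcc := hcN (self_mem_Bx c (by omega))
  have hcorner1 : (c.1 + M, c.2 + M) ∈ Bx 0 N := hcN (by rw [mem_Bx]; simp; omega)
  have hcorner2 : (c.1 - M, c.2 - M) ∈ Bx 0 N := hcN (by rw [mem_Bx]; simp; omega)
  rw [mem_Bx] at hcc hcorner1 hcorner2
  simp at hcc hcorner1 hcorner2
  have hNn : Bx 0 N ⊆ Bx c n := by
    intro v hv
    rw [mem_Bx] at hv ⊢
    simp at hv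
    omega
  have hMn : M ≤ n := by omega
  obtain ⟨zR, hzR, zR', hzR', wR, hwR, cR, adR⟩ :=
    arm_extract (by omega) hMn hag (by intro w hw h; rw [mem_Bx] at h; simp [Zs] at hw; omega) aR
  obtain ⟨zL, hzL, zL', hzL', wL, hwL, cL, adL⟩ :=
    arm_extract (by omega) hMn hag (by intro w hw h; rw [mem_Bx] at h; simp [Zs] at hw; omega) aL
  -- dual path
  obtain ⟨xT, hxT, zT, hzT, wT, hwT, cT, adT⟩ := aT
  obtain ⟨xB, hxB, zB, hzB, wB, hwB, cB, adB⟩ := aB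
  have hsy : ∀ (ω : E2 → Bool) (R : Set V2) a b, Conn ω R a b → Conn ω R b a :=
    fun ω R a b h => Pth.symm (fun _ _ h => h.symm) h
  have hdm : Conn (du ω0) (Bx c m) xT xB := by
    refine box_conn ?_ hxT hxB
    intro e he
    simp [du, h0 _ (star_ins hmM he)]
  let R' : Set V2 := {f | c.1 - n - 1 ≤ f.1 ∧ f.1 < c.1 + n + 1}
  have hnR' : Bx c n ⊆ R' := by
    intro v hv
    rw [mem_Bx] at hv
    exact ⟨by omega, by omega⟩
  have hzw : ∀ {ω : E2 → Bool} {z w : V2}, Adj ω z w → w ∈ Bx z 1 := by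
    rintro ω z w ⟨e, -, hj⟩; exact hj.close
  have same : ∀ {ω : E2 → Bool} {z w : V2}, Adj ω z w → z.1 = w.1 ∨ z.2 = w.2 := by
    intro ω z w h
    have := primal_cases h
    omega
  have hwTR : wT ∈ R' := by
    have := same adT
    simp only [Zs, Set.mem_ofPred_eq] at hwT
    rw [mem_Bx] at hzT
    exact ⟨by omega, by omega⟩
  have hwBR : wB ∈ R' := by
    have := same adB
    simp only [Zs, Set.mem_ofPred_eq] at hwB
    rw [mem_Bx] at hzB
    exact ⟨by omega, by omega⟩
  have hdual : Conn (du ω0) R' wT wB := by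
    have p1 : Conn (du ω0) R' xT wT :=
      Relation.ReflTransGen.tail (cT.mono le_rfl hnR') ⟨adT, hnR' hzT, hwTR⟩
    have p2 : Conn (du ω0) R' xB wB :=
      Relation.ReflTransGen.tail (cB.mono le_rfl hnR') ⟨adB, hnR' hzB, hwBR⟩
    have p3 : Conn (du ω0) R' xT xB := hdm.mono le_rfl ((Bx_mono c (by omega)).trans hnR')
    exact Relation.ReflTransGen.trans (hsy _ _ _ _ p1) (Relation.ReflTransGen.trans p3 p2)
  let R : Set V2 := {w | c.2 - n ≤ w.2 ∧ w.2 ≤ c.2 + n}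
  have hnR : Bx c n ⊆ R := by
    intro v hv
    rw [mem_Bx] at hv
    exact hv.2
  have hwRR : wR ∈ R := by
    have := same adR
    simp only [Zs, Set.mem_ofPred_eq] at hwR
    rw [mem_Bx] at hzR'
    exact ⟨by omega, by omega⟩
  have hwLR : wL ∈ R := by
    have := same adL
    simp only [Zs, Set.mem_ofPred_eq] at hwL
    rw [mem_Bx] at hzL'
    exact ⟨by omega, by omega⟩
  have hnot : ¬ Conn ω0 (Bx 0 N) zL zR := by
    intro hcon
    have p1 : Conn ω0 R zR wR :=
      Relation.ReflTransGen.tail (cR.mono le_rfl hnR) ⟨adR, hnR hzR', hwRR⟩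
    have p2 : Conn ω0 R zL wL :=
      Relation.ReflTransGen.tail (cL.mono le_rfl hnR) ⟨adL, hnR hzL', hwLR⟩
    have p3 : Conn ω0 R zL zR := hcon.mono le_rfl (hNn.trans hnR)
    have p4 : Conn ω0 R wL wR :=
      Relation.ReflTransGen.trans (hsy _ _ _ _ p2) (Relation.ReflTransGen.trans p3 p1)
    simp only [Zs, Set.mem_ofPred_eq] at hwL hwR hwT hwB
    exact topo p4 hwLR (x0 := c.1 - n - 1) (x1 := c.1 + n + 1) (by omega) (by omega) hdual
      (by omega) (by omega)
  -- boundary points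
  have bd : ∀ z z' w : V2, z ∈ Bx c M → Conn ω0 (Bx c n) z z' → Adj ω0 z' w → w ∉ Bx 0 N →
      ∃ b, b ∈ Bx 0 N ∧ b ∉ Bx 0 (N - 1) ∧ Conn ω0 (Bx 0 N) z b := by
    intro z z' w hz hc ha hw
    obtain ⟨b, b', h1, h2, h3, h4, -⟩ :=
      first_exit (hc.to_rtg.tail ha) (Bx 0 N) (hcN hz) hw
    refine ⟨b, h2, ?_, h1⟩
    intro hb
    have := hzw h4
    rw [mem_Bx] at this hb h3
    simp at this hb h3
    omega
  obtain ⟨bL, hbL, hbL', cbL⟩ := bd zL zL' wL hzL cL adL (by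
    simp only [Zs, Set.mem_ofPred_eq] at hwL
    rw [mem_Bx]; simp; omega)
  obtain ⟨bR, hbR, hbR', cbR⟩ := bd zR zR' wR hzR cR adR (by
    simp only [Zs, Set.mem_ofPred_eq] at hwR
    rw [mem_Bx]; simp; omega)
  refine ⟨bL, bR, hbL, hbR, hbL', hbR', ?_, ?_⟩
  · intro hcon
    exact hnot (Relation.ReflTransGen.trans cbL
      (Relation.ReflTransGen.trans hcon (hsy _ _ _ _ cbR)))
  · have q1 : Conn ω1 (Bx 0 N) zL zR := (box_conn h1 hzL hzR).mono le_rfl hcN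
    exact Relation.ReflTransGen.trans (hsy _ _ _ _ (cbL.mono hle le_rfl))
      (Relation.ReflTransGen.trans q1 (cbR.mono hle le_rfl))

/-! ### Counting boundary clusters -/

/-- boundary of the box of radius `N` -/
noncomputable def bdF (N : ℤ) : Finset V2 := by
  classical
  exact (Bx_finite 0 N).toFinset.filter (fun v => v ∉ Bx 0 (N - 1))

lemma mem_bdF {N : ℤ} {v : V2} : v ∈ bdF N ↔ v ∈ Bx 0 N ∧ v ∉ Bx 0 (N - 1) := by
  simp [bdF]

lemma card_bdF {N : ℕ} : (bdF N).card ≤ 8 * N + 4 := by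
  classical
  let I : Finset ℤ := Finset.Icc (-(N:ℤ)) N
  let J : Finset ℤ := {-(N:ℤ), (N:ℤ)}
  have hI : I.card = 2 * N + 1 := by simp [I]; omega
  have hJ : J.card ≤ 2 := Finset.card_le_two
  have hsub : bdF N ⊆ (J ×ˢ I) ∪ (I ×ˢ J) := by
    rintro ⟨a, b⟩ h
    rw [mem_bdF, mem_Bx, mem_Bx] at h
    simp [I, J] at h ⊢
    omega
  have h1 : (J ×ˢ I).card ≤ 2 * (2 * N + 1) := by
    rw [Finset.card_product, hI]; exact Nat.mul_le_mul_right _ hJ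
  have h2 : (I ×ˢ J).card ≤ (2 * N + 1) * 2 := by
    rw [Finset.card_product, hI]; exact Nat.mul_le_mul_left _ hJ
  have := (Finset.card_le_card hsub).trans (Finset.card_union_le _ _)
  omega

/-- connection as an equivalence relation on the boundary -/
def conS (N : ℤ) (ω : E2 → Bool) : Setoid (bdF N) where
  r a b := Conn ω (Bx 0 N) a b
  iseqv := ⟨fun _ => .refl, fun h => Pth.symm (fun _ _ h => h.symm) h,
    fun h h' => Relation.ReflTransGen.trans h h'⟩

noncomputable def KK (N : ℤ) (ω : E2 → Bool) : ℕ := Nat.card (Quotient (conS N ω))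

lemma KK_le (N : ℤ) (ω : E2 → Bool) : KK N ω ≤ (bdF N).card := by
  have : Nat.card (Quotient (conS N ω)) ≤ Nat.card (bdF N) :=
    Nat.card_le_card_of_surjective _ (Quotient.mk_surjective (s := conS N ω))
  simpa [KK] using this

lemma KK_anti {N : ℤ} {ω ω' : E2 → Bool} (h : ω ≤ ω') : KK N ω' ≤ KK N ω := by
  let f : Quotient (conS N ω) → Quotient (conS N ω') :=
    Quotient.map' id (fun a b hab => Conn.mono h le_rfl hab)
  have hf : Function.Surjective f := by
    intro q
    induction q using Quotient.inductionOn with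
    | _ a => exact ⟨Quotient.mk _ a, rfl⟩
  exact Nat.card_le_card_of_surjective f hf

lemma KK_drop {N : ℤ} {ω ω' : E2 → Bool} (h : ω ≤ ω') {a b : V2} (ha : a ∈ bdF N) (hb : b ∈ bdF N)
    (h0 : ¬ Conn ω (Bx 0 N) a b) (h1 : Conn ω' (Bx 0 N) a b) : KK N ω' + 1 ≤ KK N ω := by
  classical
  let f : Quotient (conS N ω) → Quotient (conS N ω') :=
    Quotient.map' id (fun a b hab => Conn.mono h le_rfl hab)
  have hf : Function.Surjective f := by
    intro q
    induction q using Quotient.inductionOn with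
    | _ a => exact ⟨Quotient.mk _ a, rfl⟩
  have hni : ¬ Function.Injective f := by
    intro hinj
    have : f (Quotient.mk _ ⟨a, ha⟩) = f (Quotient.mk _ ⟨b, hb⟩) := by
      exact Quotient.sound (s := conS N ω') h1
    exact h0 (Quotient.exact (s := conS N ω) (hinj this))
  have := Fintype.ofFinite (Quotient (conS N ω))
  have := Fintype.ofFinite (Quotient (conS N ω'))
  unfold KK
  rw [Nat.card_eq_fintype_card, Nat.card_eq_fintype_card]
  exact Fintype.card_lt_of_surjective_not_injective f hf hni

lemma KK_congr {N : ℤ} {ω ω' : E2 → Bool} (h : ∀ e ∈ Ins (Bx 0 N), ω e = ω' e) :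
    KK N ω = KK N ω' := by
  have : conS N ω = conS N ω' := by
    ext a b
    exact ⟨fun hc => Conn.congr h hc, fun hc => Conn.congr (fun e he => (h e he).symm) hc⟩
  unfold KK
  rw [this]

lemma KK_meas (N : ℤ) (P : E2 → ℝ) : Measurable (fun u => (KK N (cfg P u) : ℝ)) := by
  have h1 : Measurable (KK N) := by
    intro s _
    refine Fin'.meas (Fin'.of (F := Ins (Bx 0 N)) ?_ (Ins_finite (Bx_finite _ _)))
    intro ω ω' hw h
    simp only [Set.mem_preimage] at h ⊢
    rwa [← KK_congr hw]
  exact measurable_from_top.comp (h1.comp (meas_cfg P))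

lemma KK_int (N : ℤ) (P : E2 → ℝ) : Integrable (fun u => (KK N (cfg P u) : ℝ)) (PP E2) := by
  refine Integrable.of_bound (KK_meas N P).aestronglyMeasurable ((bdF N).card : ℝ) ?_
  refine Filter.Eventually.of_forall fun u => ?_
  simp only [Real.norm_natCast]
  exact_mod_cast KK_le N _

/-! ### Dual arms -/

lemma du_anti {ω ω' : E2 → Bool} (h : ω ≤ ω') : du ω' ≤ du ω := by
  intro e
  have := h (star e)
  unfold du
  revert this
  cases ω (star e) <;> cases ω' (star e) <;> simp

lemma fin_du {A : Set (E2 → Bool)} (hA : Fin' A) : Fin' {ω | du ω ∈ A} := by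
  obtain ⟨F, hF⟩ := hA
  refine Fin'.of (F := star '' (F : Set E2)) ?_ (F.finite_toSet.image _)
  intro ω ω' hw h
  refine hF (fun e he => ?_) h
  simp [du, hw (star e) ⟨e, he, rfl⟩]

lemma pr_du {P : E2 → ℝ} (hP : ∀ e, P e ≤ 1 / 2) {A : Set (E2 → Bool)} (hA : IsUpperSet A)
    (hA' : Fin' A) : pr (fun _ => 1 / 2) A ≤ pr P {ω | du ω ∈ A} := by
  have hup : IsUpperSet {ω : E2 → Bool | du ω ∈ A}ᶜ := by
    intro ω ω' h hω h'
    exact hω (hA (du_anti h) h')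
  have h1 := pr_mono_P hP hup
  rw [pr_compl _ (fin_du hA'), pr_compl _ (fin_du hA')] at h1
  have hfs : Fin' {η : E2 → Bool | η ∘ star ∈ A} := by
    obtain ⟨F, hF⟩ := hA'
    refine Fin'.of (F := star '' (F : Set E2)) ?_ (F.finite_toSet.image _)
    intro ω ω' hw h
    exact hF (fun e he => hw (star e) ⟨e, he, rfl⟩) h
  have h2 := pr_flip (p := 1 / 2) (by norm_num) (by norm_num) hfs
  have h3 := pr_sym (1 / 2) star hA'
  have h4 : {ω : E2 → Bool | (fun e => !(ω e)) ∈ {η : E2 → Bool | η ∘ star ∈ A}} = {ω | du ω ∈ A} := rfl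
  rw [h4, show (1:ℝ) - 1 / 2 = 1 / 2 by norm_num, h3] at h2
  linarith

/-- open all the edges in `K` -/
noncomputable def opn (K : Set E2) (ω : E2 → Bool) : E2 → Bool := by
  classical
  exact fun e => if e ∈ K then true else ω e

lemma le_opn (K : Set E2) (ω : E2 → Bool) : ω ≤ opn K ω := by
  intro e
  unfold opn
  split_ifs
  · exact Bool.le_true _
  · exact le_rfl

lemma opn_agree {K F : Set E2} {ω ω' : E2 → Bool} (h : ∀ e ∈ F, ω e = ω' e) :
    ∀ e ∈ F, opn K ω e = opn K ω' e := by
  intro e he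
  simp [opn, h e he]

lemma opn_congr {K : Set E2} {ω ω' : E2 → Bool} (h : ∀ e ∈ Kᶜ, ω e = ω' e) :
    opn K ω = opn K ω' := by
  ext e
  by_cases he : e ∈ K
  · simp [opn, he]
  · simp [opn, he, h e he]

/-- four arms around the block -/
def FourE (c : V2) (m M n : ℤ) : Set (E2 → Bool) :=
  {ω | (opn (Ins (Bx c M)) ω ∈ ArmE c m n (Zs 0 c n) ∧ opn (Ins (Bx c M)) ω ∈ ArmE c m n (Zs 2 c n)) ∧
    (du (mask (Ins (Bx c M)) ω) ∈ ArmE c m n (Zs 1 c n) ∧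
      du (mask (Ins (Bx c M)) ω) ∈ ArmE c m n (Zs 3 c n))}

lemma dep_four (c : V2) (m M n : ℤ) : Dep (FourE c m M n) (Ins (Bx c M))ᶜ := by
  intro ω ω' hw h
  unfold FourE at h ⊢
  simp only [Set.mem_ofPred_eq] at h ⊢
  rwa [← opn_congr hw, ← mask_congr hw]

lemma fin_four (c : V2) (m M n : ℤ) : Fin' (FourE c m M n) := by
  have f : ∀ Z, Fin' {ω | opn (Ins (Bx c M)) ω ∈ ArmE c m n Z} := by
    intro Z
    obtain ⟨F, hF⟩ := fin_arm c m n Z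
    exact ⟨F, fun ω ω' hw h => hF (opn_agree hw) h⟩
  have g : ∀ Z, Fin' {ω | du (mask (Ins (Bx c M)) ω) ∈ ArmE c m n Z} := by
    intro Z
    obtain ⟨F, hF⟩ := fin_du (fin_arm c m n Z)
    exact ⟨F, fun ω ω' hw h => hF (mask_agree hw) h⟩
  exact ((f _).inter (f _)).inter ((g _).inter (g _))

lemma pr_four {p : ℝ} {P : E2 → ℝ} (hp : p ≤ 1 / 2) (hP : ∀ e, p ≤ P e ∧ P e ≤ 1 / 2) {c : V2}
    {m n : ℤ} (M : ℤ) (harm : ∀ i, 7 / 8 ≤ pr (fun _ => p) (ArmE c m n (Zs i c n))) :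
    1 / 2 ≤ pr P (FourE c m M n) := by
  set A : Fin 4 → Set (E2 → Bool) := fun i => ArmE c m n (Zs i c n) with hA
  have hpr : ∀ i, 7 / 8 ≤ pr P (A i) := fun i =>
    (harm i).trans (pr_mono_P (fun e => (hP e).1) (up_arm _ _ _ _))
  have hdu : ∀ i, 7 / 8 ≤ pr P {ω | du ω ∈ A i} := fun i =>
    ((harm i).trans (pr_mono_P (fun _ => hp) (up_arm _ _ _ _))).trans
      (pr_du (fun e => (hP e).2) (up_arm _ _ _ _) (fin_arm _ _ _ _))
  have hsub : (FourE c m M n)ᶜ ⊆ ((A 0)ᶜ ∪ (A 2)ᶜ) ∪ ({ω | du ω ∈ A 1}ᶜ ∪ {ω | du ω ∈ A 3}ᶜ) := by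
    intro ω hω
    by_contra hcon
    simp only [Set.mem_union, not_or, Set.mem_compl_iff, not_not] at hcon
    refine hω ⟨⟨?_, ?_⟩, ?_, ?_⟩
    · exact up_arm _ _ _ _ (le_opn _ _) hcon.1.1
    · exact up_arm _ _ _ _ (le_opn _ _) hcon.1.2
    · exact up_arm _ _ _ _ (du_anti (mask_le _ _)) hcon.2.1
    · exact up_arm _ _ _ _ (du_anti (mask_le _ _)) hcon.2.2
  have h1 := pr_mono P hsub
  have h2 := pr_union_le P ((A 0)ᶜ ∪ (A 2)ᶜ) ({ω | du ω ∈ A 1}ᶜ ∪ {ω | du ω ∈ A 3}ᶜ)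
  have h3 := pr_union_le P (A 0)ᶜ (A 2)ᶜ
  have h4 := pr_union_le P {ω | du ω ∈ A 1}ᶜ {ω | du ω ∈ A 3}ᶜ
  rw [pr_compl P (fin_arm _ _ _ _), pr_compl P (fin_arm _ _ _ _)] at h3
  rw [pr_compl P (fin_du (fin_arm _ _ _ _)), pr_compl P (fin_du (fin_arm _ _ _ _))] at h4
  rw [pr_compl P (fin_four _ _ _ _)] at h1
  have a0 := hpr 0
  have a2 := hpr 2
  have a1 := hdu 1
  have a3 := hdu 3
  simp only [hA] at *
  linarith

/-! ### One block -/

lemma card_Ins (c : V2) (M : ℕ) : ∃ F : Finset E2, (F : Set E2) = Ins (Bx c M) ∧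
    F.card ≤ 2 * (2 * M + 1) ^ 2 := by
  classical
  let G : Finset E2 := (Finset.Icc (c.1 - M) (c.1 + M) ×ˢ Finset.Icc (c.2 - M) (c.2 + M)) ×ˢ
    (Finset.univ : Finset Bool)
  have hG : G.card = 2 * (2 * M + 1) ^ 2 := by
    simp only [G, Finset.card_product, Int.card_Icc, Finset.card_univ, Fintype.card_bool]
    rw [show (c.1 + M + 1 - (c.1 - M)).toNat = 2 * M + 1 by omega,
      show (c.2 + M + 1 - (c.2 - M)).toNat = 2 * M + 1 by omega]
    ring
  have hsub : Ins (Bx c M) ⊆ (G : Set E2) := by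
    intro e he
    have := he _ _ (Or.inl ⟨rfl, rfl⟩)
    rw [mem_Bx] at this
    simp only [G, Finset.coe_product, Set.mem_prod, Finset.mem_coe, Finset.mem_Icc]
    exact ⟨this, Finset.mem_univ _⟩
  refine ⟨(Ins_finite (Bx_finite c M)).toFinset, by simp, ?_⟩
  rw [← hG]
  refine Finset.card_le_card ?_
  intro e he
  exact hsub (by simpa using he)

lemma lam_Ico {a b : ℝ} (h0 : 0 ≤ a) (hab : a ≤ b) (h1 : b ≤ 1) :
    lam (Set.Ico a b) = ENNReal.ofReal (b - a) := by
  rw [lam, Measure.restrict_apply measurableSet_Ico,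
    Set.inter_eq_left.2 (Set.Ico_subset_Ico h0 h1)]
  simp

lemma block_step {p : ℝ} (h0 : 0 ≤ p) (hp : p < 1 / 2) {P P' : E2 → ℝ}
    (hP : ∀ e, p ≤ P e ∧ P e ≤ 1 / 2) {c : V2} {m M N n : ℕ} (hmM : m + 1 ≤ M)
    (hcN : Bx c M ⊆ Bx 0 N) (hn : 2 * N ≤ n)
    (harm : ∀ i, 7 / 8 ≤ pr (fun _ => p) (ArmE c m n (Zs i c n)))
    (hPQ : ∀ e ∈ Ins (Bx c M), P e = p) (hPQ' : ∀ e ∈ Ins (Bx c M), P' e = 1 / 2)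
    (hPP : ∀ e, e ∉ Ins (Bx c M) → P' e = P e) :
    (∫ u, (KK N (cfg P' u) : ℝ) ∂(PP E2)) + 1 / 2 * (1 / 2 - p) ^ (2 * (2 * M + 1) ^ 2) ≤
      ∫ u, (KK N (cfg P u) : ℝ) ∂(PP E2) := by
  classical
  obtain ⟨F, hF, hFc⟩ := card_Ins c M
  set Q : Set E2 := Ins (Bx c M) with hQ
  let f : E2 → ℝ → Bool × Bool := fun e r => (decide (r < P e), decide (p ≤ r ∧ r < 1 / 2))
  have hf : ∀ e, Measurable (f e) := by
    intro e
    refine (meas_lt (P e)).prodMk ?_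
    refine measurable_to_bool ?_
    have : (fun r : ℝ => decide (p ≤ r ∧ r < 1 / 2)) ⁻¹' {true} = Set.Ico p (1 / 2) := by
      ext u; simp
    rw [this]
    exact measurableSet_Ico
  let A : Set (E2 → Bool × Bool) := {η | (fun e => (η e).1) ∈ FourE c m M n}
  let B : Set (E2 → Bool × Bool) := {η | ∀ e ∈ Q, (η e).2 = true}
  have dA : Dep A Qᶜ := fun η η' hw h => dep_four c m M n (fun e he => by rw [hw e he]) h
  have fA : Fin' A := by
    obtain ⟨F, hF⟩ := fin_four c m M n
    exact ⟨F, fun η η' hw h => hF (fun e he => by rw [hw e he]) h⟩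
  have dB : Dep B Q := fun η η' hw h e he => by rw [← hw e he]; exact h e he
  have fB : Fin' B := Fin'.of dB (Ins_finite (Bx_finite _ _))
  have hind := indepG f hf dA dB fA fB (disjoint_compl_left)
  have hAval : (PP E2).real {u | (fun i => f i (u i)) ∈ A} = pr P (FourE c m M n) := rfl
  have hA2 : 1 / 2 ≤ (PP E2).real {u | (fun i => f i (u i)) ∈ A} := by
    rw [hAval]
    exact pr_four hp.le hP M harm
  have hB2 : (1 / 2 - p) ^ (2 * (2 * M + 1) ^ 2) ≤ (PP E2).real {u | (fun i => f i (u i)) ∈ B} := by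
    have e1 : {u : E2 → ℝ | (fun i => f i (u i)) ∈ B} =
        Set.pi (F : Set E2) (fun _ => Set.Ico p (1 / 2)) := by
      ext u
      simp only [B, f, Set.mem_ofPred_eq, decide_eq_true_eq, Set.mem_pi, hF, Set.mem_Ico]
    rw [e1, measureReal_def, PP, Measure.infinitePi_pi _ (fun _ _ => measurableSet_Ico)]
    rw [Finset.prod_congr rfl (fun e _ => lam_Ico h0 hp.le (by norm_num)), Finset.prod_const,
      ENNReal.toReal_pow, ENNReal.toReal_ofReal (by linarith)]
    exact pow_le_pow_of_le_one (by linarith) (by linarith) hFc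
  set Ev : Set (E2 → ℝ) := {u | (fun i => f i (u i)) ∈ A ∩ B} with hEv
  have hEvm : MeasurableSet Ev := by
    have hm : Measurable (fun (u : E2 → ℝ) i => f i (u i)) :=
      measurable_pi_lambda _ fun i => (hf i).comp (measurable_pi_apply i)
    exact hm (fA.inter fB).meas
  have hEv1 : 1 / 2 * (1 / 2 - p) ^ (2 * (2 * M + 1) ^ 2) ≤ (PP E2).real Ev := by
    rw [hEv, hind]
    exact mul_le_mul hA2 hB2 (pow_nonneg (by linarith) _) measureReal_nonneg
  have hPle : ∀ e, P e ≤ P' e := by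
    intro e
    by_cases he : e ∈ Q
    · rw [hPQ' e he]; exact (hP e).2
    · rw [hPP e he]
  have hpt : ∀ u, (KK N (cfg P' u) : ℝ) + Ev.indicator (fun _ => (1 : ℝ)) u ≤ KK N (cfg P u) := by
    intro u
    have hle : cfg P u ≤ cfg P' u := by
      intro e
      simp only [cfg, Bool.le_iff_imp, decide_eq_true_eq]
      exact fun h => h.trans_le (hPle e)
    by_cases hu : u ∈ Ev
    · rw [Set.indicator_of_mem hu]
      have hu1 : cfg P u ∈ FourE c m M n := hu.1
      have hu2 : ∀ e ∈ Q, p ≤ u e ∧ u e < 1 / 2 := by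
        intro e he
        have := hu.2 e he
        simpa only [f, decide_eq_true_eq] using this
      have c0 : ∀ e ∈ Q, cfg P u e = false := by
        intro e he
        simp only [cfg, hPQ e he, decide_eq_false_iff_not, not_lt]
        exact (hu2 e he).1
      have c1 : ∀ e ∈ Q, cfg P' u e = true := by
        intro e he
        simp only [cfg, hPQ' e he, decide_eq_true_eq]
        exact (hu2 e he).2
      have c2 : ∀ e, e ∉ Q → cfg P' u e = cfg P u e := by
        intro e he
        simp only [cfg, hPP e he]
      have o1 : opn Q (cfg P u) = cfg P' u := by
        ext e
        by_cases he : e ∈ Q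
        · simp [opn, he, c1 e he]
        · simp [opn, he, c2 e he]
      have o2 : mask Q (cfg P u) = cfg P u := by
        ext e
        by_cases he : e ∈ Q
        · simp [mask, he, c0 e he]
        · simp [mask, he]
      obtain ⟨⟨aR, aL⟩, aT, aB⟩ := hu1
      rw [← hQ, o1] at aR aL
      rw [← hQ, o2] at aT aB
      obtain ⟨a, b, ha, hb, ha', hb', hn0, hn1⟩ := block_det (N := N) (n := n) (by simp)
        (by exact_mod_cast hmM) c2 c0 c1 hcN (by exact_mod_cast hn) aR aL aT aB
      have := KK_drop hle (mem_bdF.2 ⟨ha, ha'⟩) (mem_bdF.2 ⟨hb, hb'⟩) hn0 hn1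
      exact_mod_cast this
    · rw [Set.indicator_of_notMem hu, add_zero]
      exact_mod_cast KK_anti hle
  have hii : Integrable (Ev.indicator (fun _ => (1 : ℝ))) (PP E2) :=
    (integrable_const (1 : ℝ)).indicator hEvm
  have := integral_mono ((KK_int N P').add hii) (KK_int N P) hpt
  simp only [Pi.add_apply] at this
  rw [integral_add (KK_int N P') hii, integral_indicator hEvm] at this
  simp at this
  linarith

/-! ### No percolation below one half -/

/-- block centres -/
def ctr (M : ℕ) (j : ℕ × ℕ) : V2 := ((2 * (M:ℤ) + 1) * j.1, (2 * (M:ℤ) + 1) * j.2)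

lemma fst_mem_of_Ins {R : Set V2} {e : E2} (h : e ∈ Ins R) : e.1 ∈ R :=
  h _ _ (Or.inl ⟨rfl, rfl⟩)

lemma ctr_aux {M a b x : ℤ} (hM : 0 ≤ M) (h1 : (2 * M + 1) * a - M ≤ x) (h2 : x ≤ (2 * M + 1) * a + M)
    (h3 : (2 * M + 1) * b - M ≤ x) (h4 : x ≤ (2 * M + 1) * b + M) : a = b := by
  rcases lt_trichotomy a b with h | h | h
  · nlinarith
  · exact h
  · nlinarith

lemma ctr_inj {M : ℕ} {i j : ℕ × ℕ} {v : V2} (hi : v ∈ Bx (ctr M i) M) (hj : v ∈ Bx (ctr M j) M) :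
    i = j := by
  rw [mem_Bx] at hi hj
  obtain ⟨⟨a1, a2⟩, a3, a4⟩ := hi
  obtain ⟨⟨b1, b2⟩, b3, b4⟩ := hj
  have h1 := ctr_aux (by positivity) a1 a2 b1 b2
  have h2 := ctr_aux (by positivity) a3 a4 b3 b4
  ext
  · exact_mod_cast h1
  · exact_mod_cast h2

lemma ctr_sub {M T : ℕ} {j : ℕ × ℕ} (h1 : j.1 < T) (h2 : j.2 < T) :
    Bx (ctr M j) M ⊆ Bx 0 (((2 * M + 1) * T + M : ℕ) : ℤ) := by
  intro v hv
  rw [mem_Bx] at hv ⊢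
  obtain ⟨⟨a1, a2⟩, a3, a4⟩ := hv
  simp only [ctr] at a1 a2 a3 a4
  have e1 : (2 * (M:ℤ) + 1) * j.1 ≤ (2 * M + 1) * T := by gcongr
  have e2 : (2 * (M:ℤ) + 1) * j.2 ≤ (2 * M + 1) * T := by gcongr
  have p1 : 0 ≤ (2 * (M:ℤ) + 1) * j.1 := by positivity
  have p2 : 0 ≤ (2 * (M:ℤ) + 1) * j.2 := by positivity
  push_cast
  simp only [Prod.fst_zero, Prod.snd_zero]
  refine ⟨⟨?_, ?_⟩, ?_, ?_⟩ <;> linarith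

open Classical in
/-- mixed parameters -/
noncomputable def mixP (p : ℝ) (M : ℕ) (J : Finset (ℕ × ℕ)) (e : E2) : ℝ :=
  if ∃ j ∈ J, e ∈ Ins (Bx (ctr M j) M) then 1 / 2 else p

lemma no_perc {p c : ℝ} (h0 : 0 ≤ p) (hp : p < 1 / 2) (hc : 0 < c) (hth : ∀ n : ℕ, c ≤ th p n) :
    False := by
  classical
  obtain ⟨m, hm⟩ := zero_one hc hth (ε := (1 / 8) ^ 4) (by positivity)
  have harm : ∀ n : ℕ, m ≤ n → ∀ c i, 7 / 8 ≤ pr (fun _ => p) (ArmE c m n (Zs i c n)) := by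
    intro n hn c i
    have := arm_bound h0 (by linarith) (by norm_num) (hm n hn) c i
    linarith
  set M := m + 1 with hM
  set κ : ℝ := 1 / 2 * (1 / 2 - p) ^ (2 * (2 * M + 1) ^ 2) with hκ
  have hκ0 : 0 < κ := by
    have : 0 < 1 / 2 - p := by linarith
    positivity
  have key : ∀ T : ℕ, (T:ℝ) ^ 2 * κ ≤ 8 * (((2 * M + 1) * T + M : ℕ) : ℝ) + 4 := by
    intro T
    set N : ℕ := (2 * M + 1) * T + M with hN
    have ind : ∀ J : Finset (ℕ × ℕ), J ⊆ Finset.range T ×ˢ Finset.range T →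
        (∫ u, (KK N (cfg (mixP p M J) u):ℝ) ∂(PP E2)) + J.card * κ ≤ ((bdF N).card : ℝ) := by
      intro J
      induction J using Finset.induction_on with
      | empty =>
        intro _
        simp only [Finset.card_empty, Nat.cast_zero, zero_mul, add_zero]
        calc (∫ u, (KK N (cfg (mixP p M ∅) u):ℝ) ∂(PP E2))
            ≤ ∫ u, ((bdF N).card : ℝ) ∂(PP E2) := by
              refine integral_mono (KK_int _ _) (integrable_const _) fun u => ?_
              exact Nat.cast_le.2 (KK_le N (cfg (mixP p M ∅) u))
          _ = _ := by simp
      | insert j J hj ih =>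
        intro hJ
        have ih := ih ((Finset.subset_insert _ _).trans hJ)
        have hjT := hJ (Finset.mem_insert_self j J)
        simp only [Finset.mem_product, Finset.mem_range] at hjT
        have hout : ∀ e ∈ Ins (Bx (ctr M j) M), ¬ ∃ i ∈ J, e ∈ Ins (Bx (ctr M i) M) := by
          rintro e he ⟨i, hi, hei⟩
          have := ctr_inj (fst_mem_of_Ins he) (fst_mem_of_Ins hei)
          exact hj (this ▸ hi)
        have := block_step h0 hp (P := mixP p M J) (P' := mixP p M (insert j J)) (c := ctr M j)
          (m := m) (M := M) (N := N) (n := 2 * N) ?_ le_rfl (ctr_sub hjT.1 hjT.2) le_rfl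
          (harm _ (by rw [hN]; omega) _) ?_ ?_ ?_
        · rw [Finset.card_insert_of_notMem hj]
          push_cast
          linarith
        · intro e
          unfold mixP
          split_ifs <;> constructor <;> linarith
        · intro e he
          simp only [mixP, if_neg (hout e he)]
        · intro e he
          unfold mixP
          rw [if_pos ⟨j, Finset.mem_insert_self _ _, he⟩]
        · intro e he
          unfold mixP
          simp [he]
    have := ind _ le_rfl
    have h1 : 0 ≤ (∫ u, (KK N (cfg (mixP p M (Finset.range T ×ˢ Finset.range T)) u):ℝ) ∂(PP E2)) :=
      integral_nonneg fun u => by positivity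
    have h2 : ((bdF N).card : ℝ) ≤ 8 * N + 4 := by exact_mod_cast card_bdF
    simp only [Finset.card_product, Finset.card_range] at this
    push_cast at this
    nlinarith
  obtain ⟨T, hT⟩ := exists_nat_gt ((8 * (3 * M + 1) + 4 : ℝ) / κ)
  rw [div_lt_iff₀ hκ0] at hT
  have hk := key (T + 1)
  push_cast at hk
  have hT0 : (0:ℝ) ≤ T := by positivity
  have hM0 : (0:ℝ) ≤ (M:ℝ) := by positivity
  have : ((T:ℝ) + 1) * (8 * (3 * M + 1) + 4) < (T + 1) * ((T + 1) * κ) := by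
    apply mul_lt_mul_of_pos_left _ (by positivity)
    nlinarith
  nlinarith [mul_nonneg hT0 hM0]

lemma exists_phi {p : ℝ} (h0 : 0 ≤ p) (hp : p < 1 / 2) : ∃ S : Finset V2, (0:V2) ∈ S ∧ phi p S < 1 := by
  rcases h0.eq_or_lt with rfl | h0'
  · exact ⟨{0}, by simp, by simp [phi]⟩
  by_contra! hcon
  refine no_perc (p := (p + 1 / 2) / 2) (c := 1 - Real.exp (-((p + 1 / 2) / 2 - p))) (by linarith)
    (by linarith) ?_ ?_
  · have : Real.exp (-((p + 1 / 2) / 2 - p)) < 1 := by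
      rw [Real.exp_lt_one_iff]; linarith
    linarith
  · intro n
    exact dct_lower h0' (by linarith) (by linarith) hcon (by positivity)

lemma phi_nonneg {p : ℝ} (h0 : 0 ≤ p) (S : Finset V2) : 0 ≤ phi p S :=
  Finset.sum_nonneg fun _ _ => mul_nonneg h0 (pr_nonneg _ _)

lemma th_small {p : ℝ} (h0 : 0 ≤ p) (hp : p < 1 / 2) (k : ℕ) {C ε : ℝ} (hC : 0 ≤ C) (hε : 0 < ε) :
    ∃ m : ℕ, k < m ∧ C * (m:ℝ) ^ 2 * th p ((m:ℤ) - 1) < ε := by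
  obtain ⟨S, hS0, hS⟩ := exists_phi h0 hp
  have hφ := phi_nonneg h0 S
  obtain ⟨L, hL⟩ : ∃ L : ℕ, (S : Set V2) ⊆ Bx 0 L := by
    refine ⟨∑ v ∈ S, (v.1.natAbs + v.2.natAbs), fun v hv => ?_⟩
    have := Finset.single_le_sum (f := fun v : V2 => v.1.natAbs + v.2.natAbs)
      (fun _ _ => Nat.zero_le _) (Finset.mem_coe.1 hv)
    rw [mem_Bx]
    simp only [Prod.fst_zero, Prod.snd_zero]
    omega
  have hth1 : ∀ n, th p n ≤ 1 := fun n => pr_le_one _ _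
  have hdec : ∀ j : ℕ, th p ((j * (L + 1) : ℕ) : ℤ) ≤ phi p S ^ j := by
    intro j
    induction j with
    | zero => simpa using hth1 _
    | succ j ih =>
      have := dct_decay h0 (by linarith) hS0 hL (n := ((j * (L + 1) : ℕ) : ℤ)) (by positivity)
      have e : (((j + 1) * (L + 1) : ℕ) : ℤ) = ((j * (L + 1) : ℕ) : ℤ) + L + 1 := by
        push_cast; ring
      rw [e, pow_succ']
      exact this.trans (mul_le_mul_of_nonneg_left ih hφ)
  have hlim : Filter.Tendsto (fun j : ℕ => C * (L + 2 : ℝ) ^ 2 * ((j:ℝ) ^ 2 * phi p S ^ j))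
      Filter.atTop (nhds (C * (L + 2 : ℝ) ^ 2 * 0)) :=
    (tendsto_pow_const_mul_const_pow_of_lt_one 2 hφ hS).const_mul _
  rw [mul_zero] at hlim
  obtain ⟨j, hj1, hj2⟩ := ((hlim.eventually (gt_mem_nhds hε)).and
    (Filter.eventually_ge_atTop (k + 1))).exists
  refine ⟨j * (L + 1) + 1, by nlinarith, ?_⟩
  have e : ((j * (L + 1) + 1 : ℕ) : ℤ) - 1 = ((j * (L + 1) : ℕ) : ℤ) := by push_cast; ring
  rw [e]
  refine lt_of_le_of_lt ?_ hj1
  have hj : (1:ℝ) ≤ j := by exact_mod_cast (by omega : 1 ≤ j)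
  have hm : ((j * (L + 1) + 1 : ℕ) : ℝ) ≤ (L + 2) * j := by push_cast; nlinarith
  calc C * ((j * (L + 1) + 1 : ℕ) : ℝ) ^ 2 * th p ((j * (L + 1) : ℕ) : ℤ)
      ≤ C * ((L + 2) * j) ^ 2 * phi p S ^ j := by
        refine mul_le_mul ?_ (hdec j) (pr_nonneg _ _) (by positivity)
        gcongr
    _ = _ := by ring

/-! ### The binary digits of a uniform variable -/

/-- fair coin -/
noncomputable def coin : Measure Bool :=
  (2⁻¹ : ℝ≥0∞) • Measure.dirac true + (2⁻¹ : ℝ≥0∞) • Measure.dirac false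

instance coin_prob : IsProbabilityMeasure coin := by
  constructor
  simp [coin, ENNReal.inv_two_add_inv_two]

/-- digit sequence -/
noncomputable def dig (x : ℝ) : ℕ → Bool := fun n => binDigit n x

lemma meas_binDigit (n : ℕ) : Measurable (binDigit n) := by
  have h : Measurable (fun x : ℝ => ⌊x * 2 ^ (n + 1)⌋) := Int.measurable_floor.comp
    (measurable_id.mul_const _)
  have h2 : Measurable (fun z : ℤ => decide (z % 2 = 1)) := measurable_from_top
  exact h2.comp h

lemma meas_dig : Measurable dig := measurable_pi_lambda _ meas_binDigit

/-- doubling map -/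
noncomputable def dbl (x : ℝ) : ℝ := Int.fract (2 * x)

lemma meas_dbl : Measurable dbl := measurable_fract.comp (measurable_id.const_mul 2)

lemma dig_dbl (x : ℝ) (n : ℕ) : binDigit n (dbl x) = binDigit (n + 1) x := by
  unfold binDigit dbl
  have e : Int.fract (2 * x) * 2 ^ (n + 1) =
      x * 2 ^ (n + 1 + 1) - ((⌊2 * x⌋ * 2 ^ (n + 1) : ℤ) : ℝ) := by
    push_cast
    rw [Int.fract]; ring
  rw [e, Int.floor_sub_intCast]
  have : ((⌊2 * x⌋ * 2 ^ (n + 1) : ℤ)) = 2 * (⌊2 * x⌋ * 2 ^ n) := by ring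
  rw [this]
  congr 1
  rw [eq_iff_iff]
  constructor <;> intro h <;> omega

lemma vol_half (a : ℝ) (B : Set ℝ) : volume ((fun x : ℝ => 2 * x - a) ⁻¹' B) = 2⁻¹ * volume B := by
  have : (fun x : ℝ => 2 * x - a) ⁻¹' B = (fun x => 2 * x) ⁻¹' ((fun x => x + (-a)) ⁻¹' B) := by
    ext x; simp [sub_eq_add_neg]
  rw [this, Real.volume_preimage_mul_left (by norm_num), measure_preimage_add_right]
  congr 1
  rw [abs_of_pos (by norm_num), ENNReal.ofReal_inv_of_pos (by norm_num)]
  simp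

lemma lam_step_false {B : Set ℝ} (hB : MeasurableSet B) :
    lam (binDigit 0 ⁻¹' {false} ∩ dbl ⁻¹' B) = 2⁻¹ * lam B := by
  unfold lam
  rw [Measure.restrict_apply ((meas_binDigit 0 (measurableSet_singleton _)).inter (meas_dbl hB)),
    Measure.restrict_apply hB, ← vol_half 0]
  congr 1
  ext x
  simp only [binDigit, dbl, mem_inter_iff, mem_preimage, mem_singleton_iff, decide_eq_false_iff_not,
    mem_Ico, sub_zero, zero_add, pow_one]
  constructor
  · rintro ⟨⟨h1, h2⟩, h3, h4⟩
    have : ⌊2 * x⌋ = 0 := by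
      have a1 : 0 ≤ ⌊2 * x⌋ := Int.floor_nonneg.2 (by linarith)
      have a2 : ⌊2 * x⌋ < 2 := Int.floor_lt.2 (by push_cast; linarith)
      rw [mul_comm] at h1
      omega
    rw [Int.floor_eq_zero_iff, mem_Ico] at this
    rw [Int.fract_eq_self.2 this] at h2
    exact ⟨h2, this⟩
  · rintro ⟨h1, h2⟩
    have : ⌊2 * x⌋ = 0 := Int.floor_eq_zero_iff.2 h2
    rw [Int.fract_eq_self.2 h2, mul_comm x, this]
    refine ⟨⟨by norm_num, h1⟩, ?_, ?_⟩ <;> linarith [h2.1, h2.2]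

lemma lam_step_true {B : Set ℝ} (hB : MeasurableSet B) :
    lam (binDigit 0 ⁻¹' {true} ∩ dbl ⁻¹' B) = 2⁻¹ * lam B := by
  unfold lam
  rw [Measure.restrict_apply ((meas_binDigit 0 (measurableSet_singleton _)).inter (meas_dbl hB)),
    Measure.restrict_apply hB, ← vol_half 1]
  congr 1
  ext x
  simp only [binDigit, dbl, mem_inter_iff, mem_preimage, mem_singleton_iff, decide_eq_true_eq,
    mem_Ico, zero_add, pow_one]
  constructor
  · rintro ⟨⟨h1, h2⟩, h3, h4⟩
    have : ⌊2 * x⌋ = 1 := by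
      have a1 : 0 ≤ ⌊2 * x⌋ := Int.floor_nonneg.2 (by linarith)
      have a2 : ⌊2 * x⌋ < 2 := Int.floor_lt.2 (by push_cast; linarith)
      rw [mul_comm] at h1
      omega
    rw [Int.fract, this] at h2
    rw [Int.floor_eq_iff] at this
    push_cast at this h2
    exact ⟨h2, by linarith [this.1], by linarith [this.2]⟩
  · rintro ⟨h1, h2⟩
    have : ⌊2 * x⌋ = 1 := by
      rw [Int.floor_eq_iff]; push_cast
      constructor <;> linarith [h2.1, h2.2]
    rw [Int.fract, mul_comm x, this]
    push_cast
    refine ⟨⟨by norm_num, h1⟩, ?_, ?_⟩ <;> linarith [h2.1, h2.2]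

lemma lam_step (t : Set Bool) {B : Set ℝ} (hB : MeasurableSet B) :
    lam (binDigit 0 ⁻¹' t ∩ dbl ⁻¹' B) = coin t * lam B := by
  classical
  have hd : binDigit 0 ⁻¹' t ∩ dbl ⁻¹' B = (if true ∈ t then binDigit 0 ⁻¹' {true} ∩ dbl ⁻¹' B else ∅) ∪
      (if false ∈ t then binDigit 0 ⁻¹' {false} ∩ dbl ⁻¹' B else ∅) := by
    ext x
    cases h : binDigit 0 x <;> split_ifs <;> simp_all
  have hdis : Disjoint (binDigit 0 ⁻¹' {true} ∩ dbl ⁻¹' B) (binDigit 0 ⁻¹' {false} ∩ dbl ⁻¹' B) := by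
    rw [Set.disjoint_left]
    rintro x ⟨h1, _⟩ ⟨h2, _⟩
    simp_all
  have hm : MeasurableSet (binDigit 0 ⁻¹' {false} ∩ dbl ⁻¹' B) :=
    (meas_binDigit 0 (measurableSet_singleton _)).inter (meas_dbl hB)
  rw [hd]
  by_cases h1 : true ∈ t <;> by_cases h2 : false ∈ t
  · rw [if_pos h1, if_pos h2, measure_union hdis hm, lam_step_true hB, lam_step_false hB]
    simp [coin, h1, h2, ← add_mul]
  · rw [if_pos h1, if_neg h2, Set.union_empty, lam_step_true hB]
    simp [coin, h1, h2]
  · rw [if_neg h1, if_pos h2, Set.empty_union, lam_step_false hB]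
    simp [coin, h1, h2]
  · rw [if_neg h1, if_neg h2]
    simp [coin, h1, h2]

lemma lam_cyl (n : ℕ) : ∀ t : ℕ → Set Bool,
    lam {x | ∀ i < n, binDigit i x ∈ t i} = ∏ i ∈ Finset.range n, coin (t i) := by
  induction n with
  | zero => intro t; simpa using measure_univ (μ := lam)
  | succ n ih =>
    intro t
    have e : {x | ∀ i < n + 1, binDigit i x ∈ t i} =
        binDigit 0 ⁻¹' (t 0) ∩ dbl ⁻¹' {x | ∀ i < n, binDigit i x ∈ t (i + 1)} := by
      ext x
      simp only [mem_inter_iff, mem_preimage, Set.mem_ofPred_eq, dig_dbl]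
      constructor
      · intro h
        exact ⟨h 0 (by omega), fun i hi => h (i + 1) (by omega)⟩
      · rintro ⟨h1, h2⟩ i hi
        cases i with
        | zero => exact h1
        | succ i => exact h2 i (by omega)
    have hm : MeasurableSet {x | ∀ i < n, binDigit i x ∈ t (i + 1)} := by
      have : {x | ∀ i < n, binDigit i x ∈ t (i + 1)} =
          ⋂ i, ⋂ (_ : i < n), binDigit i ⁻¹' (t (i + 1)) := by ext; simp
      rw [this]
      exact MeasurableSet.iInter fun i => MeasurableSet.iInter fun _ =>
        meas_binDigit i (Set.toFinite _).measurableSet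
    rw [e, lam_step _ hm, ih, Finset.prod_range_succ', mul_comm]

lemma lam_map_dig : lam.map dig = Measure.infinitePi (fun _ : ℕ => coin) := by
  classical
  refine Measure.eq_infinitePi _ fun s t ht => ?_
  rw [Measure.map_apply meas_dig (.pi s.countable_toSet fun _ _ => ht _)]
  obtain ⟨n, hn⟩ : ∃ n, s ⊆ Finset.range n := s.exists_nat_subset_range
  have e : dig ⁻¹' ((s : Set ℕ).pi t) =
      {x | ∀ i < n, binDigit i x ∈ (if i ∈ s then t i else Set.univ)} := by
    ext x
    simp only [mem_preimage, Set.mem_pi, Finset.mem_coe, dig, Set.mem_ofPred_eq]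
    constructor
    · intro h i _
      split_ifs with hi
      · exact h i hi
      · trivial
    · intro h i hi
      have := h i (Finset.mem_range.1 (hn hi))
      rwa [if_pos hi] at this
  rw [e, lam_cyl]
  rw [← Finset.prod_subset hn (f := fun i => coin (if i ∈ s then t i else Set.univ))]
  · exact Finset.prod_congr rfl fun i hi => by rw [if_pos hi]
  · intro i _ hi
    rw [if_neg hi, measure_univ]

/-- number with given digits -/
noncomputable def num (b : ℕ → Bool) : ℝ := ∑' n : ℕ, if b n then ((2 : ℝ) ^ (n + 1))⁻¹ else 0

lemma summable_num (b : ℕ → Bool) : Summable (fun n : ℕ => if b n then ((2 : ℝ) ^ (n + 1))⁻¹ else 0) := by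
  refine Summable.of_nonneg_of_le (f := fun n => (1/2 : ℝ) ^ n) ?_ ?_ summable_geometric_two
  · intro n; split_ifs <;> positivity
  · intro n
    split_ifs
    · rw [← inv_pow, pow_succ, one_div]
      have : (0:ℝ) ≤ 2⁻¹ ^ n := by positivity
      linarith
    · positivity

lemma meas_num : Measurable num := by
  have h : ∀ n : ℕ, Measurable (fun b : ℕ → Bool =>
      ∑ i ∈ Finset.range n, if b i then ((2 : ℝ) ^ (i + 1))⁻¹ else 0) := by
    intro n
    refine Finset.measurable_sum _ fun i _ => ?_
    have h2 : Measurable (fun z : Bool => if z then ((2 : ℝ) ^ (i + 1))⁻¹ else 0) := measurable_from_top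
    exact h2.comp (measurable_pi_apply i)
  refine measurable_of_tendsto_metrizable h ?_
  rw [tendsto_pi_nhds]
  intro b
  exact (summable_num b).hasSum.tendsto_sum_nat

lemma num_partial {x : ℝ} (h0 : 0 ≤ x) (h1 : x < 1) (n : ℕ) :
    (∑ i ∈ Finset.range n, if dig x i then ((2 : ℝ) ^ (i + 1))⁻¹ else 0) = ⌊x * 2 ^ n⌋ / 2 ^ n := by
  induction n with
  | zero =>
    have : ⌊x⌋ = 0 := Int.floor_eq_zero_iff.2 ⟨h0, h1⟩
    simp [this]
  | succ n ih =>
    rw [Finset.sum_range_succ, ih]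
    have hf : ⌊x * 2 ^ (n + 1)⌋ = 2 * ⌊x * 2 ^ n⌋ + (if dig x n then 1 else 0) := by
      have a1 : 2 * ⌊x * 2 ^ n⌋ ≤ ⌊x * 2 ^ (n + 1)⌋ := by
        rw [Int.le_floor]
        push_cast
        have := Int.floor_le (x * 2 ^ n)
        rw [pow_succ]; linarith
      have a2 : ⌊x * 2 ^ (n + 1)⌋ < 2 * ⌊x * 2 ^ n⌋ + 2 := by
        rw [Int.floor_lt]
        push_cast
        have := Int.lt_floor_add_one (x * 2 ^ n)
        rw [pow_succ]; linarith
      simp only [dig, binDigit, decide_eq_true_eq]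
      split_ifs <;> omega
    rw [hf]
    have hp : (2:ℝ) ^ n ≠ 0 := by positivity
    split_ifs
    · push_cast
      field_simp
      ring
    · push_cast
      field_simp
      ring

lemma num_dig {x : ℝ} (h0 : 0 ≤ x) (h1 : x < 1) : num (dig x) = x := by
  have ht := (summable_num (dig x)).hasSum.tendsto_sum_nat
  refine tendsto_nhds_unique ht ?_
  have h2 : Filter.Tendsto (fun n : ℕ => x - (1/2:ℝ) ^ n) Filter.atTop (nhds (x - 0)) :=
    tendsto_const_nhds.sub (tendsto_pow_atTop_nhds_zero_of_lt_one (by norm_num) (by norm_num))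
  rw [sub_zero] at h2
  refine tendsto_of_tendsto_of_tendsto_of_le_of_le h2 tendsto_const_nhds ?_ ?_
  · intro n
    simp only
    rw [num_partial h0 h1, le_div_iff₀ (by positivity), sub_mul, ← mul_pow]
    have := Int.lt_floor_add_one (x * 2 ^ n)
    norm_num
    linarith
  · intro n
    simp only
    rw [num_partial h0 h1, div_le_iff₀ (by positivity)]
    exact Int.floor_le _

lemma coin_map_num : (Measure.infinitePi (fun _ : ℕ => coin)).map num = lam := by
  rw [← lam_map_dig, Measure.map_map meas_num meas_dig]
  have : num ∘ dig =ᵐ[lam] id := by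
    unfold lam
    filter_upwards [ae_restrict_mem measurableSet_Ico] with x hx
    exact num_dig hx.1 hx.2
  rw [Measure.map_congr this, Measure.map_id]

lemma coin_reindex : (Measure.infinitePi (fun _ : ℕ => coin)).map
    (fun b (z : ℕ × ℕ) => b (Nat.pair z.1 z.2)) = Measure.infinitePi (fun _ : ℕ × ℕ => coin) := by
  have h := Measure.infinitePi_map_piCongrLeft (X := fun _ : ℕ × ℕ => Bool) (fun _ : ℕ × ℕ => coin)
    Nat.pairEquiv.symm
  convert h using 2
  ext b z
  obtain ⟨n, rfl⟩ := Nat.pairEquiv.symm.surjective z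
  have := Equiv.piCongrLeft_apply_apply (fun _ : ℕ × ℕ => Bool) Nat.pairEquiv.symm b n
  rw [MeasurableEquiv.coe_piCongrLeft, this]
  exact congrArg b (Nat.pair_unpair n)

lemma lam_map_unif : lam.map (fun x (i : ℕ) => unifSample i x) = PP ℕ := by
  have e : (fun x (i : ℕ) => unifSample i x) =
      (fun (b : ℕ → ℕ → Bool) i => num (b i)) ∘ (MeasurableEquiv.curry ℕ ℕ Bool) ∘
        (fun b (z : ℕ × ℕ) => b (Nat.pair z.1 z.2)) ∘ dig := by
    funext x i
    rfl
  have m1 : Measurable (fun (b : ℕ → Bool) (z : ℕ × ℕ) => b (Nat.pair z.1 z.2)) :=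
    measurable_pi_lambda _ fun z => measurable_pi_apply _
  have m2 := (MeasurableEquiv.curry ℕ ℕ Bool).measurable
  have m3 : Measurable (fun (b : ℕ → ℕ → Bool) i => num (b i)) :=
    measurable_pi_lambda _ fun i => meas_num.comp (measurable_pi_apply i)
  rw [e, ← Measure.map_map m3 (m2.comp (m1.comp meas_dig)),
    ← Measure.map_map m2 (m1.comp meas_dig), ← Measure.map_map m1 meas_dig, lam_map_dig,
    coin_reindex, Measure.infinitePi_map_curry (fun _ _ => coin),
    Measure.infinitePi_map_pi _ (fun _ => meas_num)]
  unfold PP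
  simp only [coin_map_num]

lemma meas_unif : Measurable (fun x (i : ℕ) => unifSample i x) := by
  refine measurable_pi_lambda _ fun i => ?_
  exact meas_num.comp (measurable_pi_lambda _ fun n => meas_binDigit _)

lemma bern_eq {ι : Type*} [Encodable ι] (P : ι → ℝ) :
    bernoulliProduct P = (PP ι).map (cfg P) := by
  have e : (fun x (i : ι) => decide (unifSample (Encodable.encode i) x < P i)) =
      cfg P ∘ (fun u : ℕ → ℝ => u ∘ Encodable.encode) ∘ (fun x (i : ℕ) => unifSample i x) := rfl
  have m1 : Measurable (fun u : ℕ → ℝ => u ∘ (Encodable.encode : ι → ℕ)) :=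
    measurable_pi_lambda _ fun z => measurable_pi_apply _
  have : bernoulliProduct P = Measure.map (fun x (i : ι) => decide (unifSample (Encodable.encode i) x < P i)) lam := rfl
  rw [this, e, ← Measure.map_map (meas_cfg P) (m1.comp meas_unif), ← Measure.map_map m1 meas_unif,
    lam_map_unif, PP_map_comp _ Encodable.encode_injective]

lemma bern_le {ι : Type*} [Encodable ι] (P : ι → ℝ) {A B : Set (ι → Bool)} (hAB : A ⊆ B) (hB : Fin' B) :
    bernoulliProduct P A ≤ ENNReal.ofReal (pr P B) := by
  refine (measure_mono hAB).trans ?_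
  rw [bern_eq, Measure.map_apply (meas_cfg P) hB.meas, pr, measureReal_def,
    ENNReal.ofReal_toReal (measure_ne_top _ _)]

/-! ### From the slab to the plane -/

lemma Fin'.biUnion {ι α κ : Type*} (s : Finset κ) (A : κ → Set (ι → α)) (h : ∀ k, Fin' (A k)) :
    Fin' (⋃ k ∈ s, A k) := by
  classical
  choose F hF using h
  refine ⟨s.biUnion F, fun ω ω' hw hA => ?_⟩
  simp only [Set.mem_iUnion] at hA ⊢
  obtain ⟨k, hk, h⟩ := hA
  exact ⟨k, hk, hF k (fun e he => hw e (by
    simp only [Finset.coe_biUnion, Set.mem_iUnion]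
    exact ⟨k, hk, he⟩)) h⟩

lemma Fin'.comp {ι α κ : Type*} (g : κ → ι) {A : Set (κ → α)} (h : Fin' A) :
    Fin' {ω : ι → α | ω ∘ g ∈ A} := by
  classical
  obtain ⟨F, hF⟩ := h
  refine ⟨F.image g, fun ω ω' hw hA => ?_⟩
  exact hF (fun e he => hw (g e) (by
    simp only [Finset.coe_image]; exact Set.mem_image_of_mem g he)) hA

/-- the copy of the planar lattice at level `z` -/
def lvl (z : ℤ) (e : E2) : EdgeIdx := ((e.1.1, e.1.2, z), if e.2 then 1 else 0)

lemma lvl_inj (z : ℤ) : Function.Injective (lvl z) := by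
  rintro ⟨⟨a, b⟩, c⟩ ⟨⟨a', b'⟩, c'⟩ h
  cases c <;> cases c' <;> simp_all [lvl]

/-- finite box of vertical bonds -/
noncomputable def vertF (k m : ℕ) : Finset EdgeIdx :=
  (Finset.Icc (-(m:ℤ)) (2 * m) ×ˢ Finset.Icc (-(m:ℤ)) (2 * m) ×ˢ Finset.Icc (0:ℤ) k).image
    (fun v => (v, 2))

noncomputable def startF (k m : ℕ) : Finset Vtx :=
  Finset.Icc (0:ℤ) (m - 1) ×ˢ Finset.Icc (0:ℤ) (m - 1) ×ˢ Finset.Icc (0:ℤ) k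

lemma step_plane {k m : ℕ} {ω : Config} (hv : ∀ e ∈ vertF k m, ω e ≠ true) {u v : Vtx}
    (h : OpenAdj k ω u v) (h1 : -(m:ℤ) ≤ u.1) (h2 : u.1 ≤ 2 * m) (h3 : -(m:ℤ) ≤ u.2.1)
    (h4 : u.2.1 ≤ 2 * m) :
    v.2.2 = u.2.2 ∧ Adj (ω ∘ lvl u.2.2) (u.1, u.2.1) (v.1, v.2.1) := by
  obtain ⟨a, b, c⟩ := u
  obtain ⟨a', b', c'⟩ := v
  simp only at h1 h2 h3 h4 ⊢
  obtain ⟨i, ⟨hi, hE, ho⟩ | ⟨hi, hE, ho⟩⟩ := h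
  · fin_cases i
    · simp only [dvec, Prod.mk_add_mk, Prod.mk.injEq] at hi
      obtain ⟨rfl, rfl, rfl⟩ := hi
      refine ⟨by ring, ((a, b), false), ho, Or.inl ⟨rfl, ?_⟩⟩
      simp [dv]
    · simp only [dvec, Prod.mk_add_mk, Prod.mk.injEq] at hi
      obtain ⟨rfl, rfl, rfl⟩ := hi
      refine ⟨by ring, ((a, b), true), ho, Or.inl ⟨rfl, ?_⟩⟩
      simp [dv]
    · exfalso
      refine hv _ ?_ ho
      have := hE.1
      simp only [InSlab] at this
      simp only [vertF, Finset.mem_image, Finset.mem_product, Finset.mem_Icc]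
      exact ⟨(a, b, c), ⟨⟨h1, h2⟩, ⟨h3, h4⟩, this⟩, rfl⟩
  · fin_cases i
    · simp only [dvec, Prod.mk_add_mk, Prod.mk.injEq] at hi
      obtain ⟨rfl, rfl, rfl⟩ := hi
      simp only [add_zero]
      refine ⟨trivial, ((a', b'), false), ho, Or.inr ⟨rfl, ?_⟩⟩
      simp [dv]
    · simp only [dvec, Prod.mk_add_mk, Prod.mk.injEq] at hi
      obtain ⟨rfl, rfl, rfl⟩ := hi
      simp only [add_zero]
      refine ⟨trivial, ((a', b'), true), ho, Or.inr ⟨rfl, ?_⟩⟩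
      simp [dv]
    · exfalso
      refine hv _ ?_ ho
      have := hE.1
      simp only [InSlab] at this
      simp only [dvec, Prod.mk_add_mk, Prod.mk.injEq, Fin.reduceFinMk] at hi
      simp only [vertF, Finset.mem_image, Finset.mem_product, Finset.mem_Icc]
      refine ⟨(a', b', c'), ⟨⟨?_, ?_⟩, ⟨?_, ?_⟩, this⟩, rfl⟩ <;> simp only <;> omega

lemma Cm_sub {k m : ℕ} (hkm : k < m) : CmEvent k m (Sm k m) ⊆
    (⋃ e ∈ vertF k m, {ω : Config | ω e = true}) ∪
    ⋃ v ∈ startF k m, {ω : Config | ω ∘ lvl v.2.2 ∈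
      {ω | Ex ω (Bx (v.1, v.2.1) ((m:ℤ) - 1)) (v.1, v.2.1)}} := by
  rintro ω ⟨x, hx, y, hy, hfar, -⟩
  by_cases hv : ∃ e ∈ vertF k m, ω e = true
  · left
    obtain ⟨e, he, h⟩ := hv
    simp only [Set.mem_iUnion]
    exact ⟨e, he, h⟩
  right
  push Not at hv
  have hfar := hfar x hx
  obtain ⟨x1, x2, x3, x4, xs⟩ := hx
  simp only [Set.mem_iUnion]
  refine ⟨x, ?_, ?_⟩
  · simp only [startF, Finset.mem_product, Finset.mem_Icc]
    exact ⟨⟨x1, x2⟩, ⟨x3, x4⟩, xs⟩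
  have hys : InSlab k y := by
    rcases Relation.ReflTransGen.cases_tail hy with h | ⟨z, -, i, ⟨h1, h2, -⟩ | ⟨-, h2, -⟩⟩
    · rw [h]; exact xs
    · rw [h1]; exact h2.2
    · exact h2.1
  let R : Set Vtx := {v | (v.1, v.2.1) ∈ Bx (x.1, x.2.1) ((m:ℤ) - 1)}
  have hxR : x ∈ R := self_mem_Bx _ (by omega)
  have hyR : y ∉ R := by
    intro h
    simp only [R, Set.mem_ofPred_eq, Bx] at h
    unfold supDist at hfar
    have h3 : |y.2.2 - x.2.2| ≤ k := by
      rw [abs_le]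
      unfold InSlab at hys xs
      omega
    have : max |y.1 - x.1| (max |y.2.1 - x.2.1| |y.2.2 - x.2.2|) ≤ (m:ℤ) - 1 :=
      max_le h.1 (max_le h.2 (by omega))
    omega
  have hbox : ∀ u ∈ R, -(m:ℤ) ≤ u.1 ∧ u.1 ≤ 2 * m ∧ -(m:ℤ) ≤ u.2.1 ∧ u.2.1 ≤ 2 * m := by
    intro u hu
    have := mem_Bx.1 hu
    simp only at this
    omega
  obtain ⟨z, w, hz, hzR, hwR, hzw, -⟩ := first_exit hy R hxR hyR
  have hind : z.2.2 = x.2.2 ∧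
      Relation.ReflTransGen (Adj (ω ∘ lvl x.2.2)) (x.1, x.2.1) (z.1, z.2.1) := by
    clear hzw hzR
    induction hz with
    | refl => exact ⟨rfl, .refl⟩
    | tail _ hs ih =>
      obtain ⟨hs, hR1, -⟩ := hs
      obtain ⟨b1, b2, b3, b4⟩ := hbox _ hR1
      have := step_plane hv hs b1 b2 b3 b4
      rw [ih.1] at this
      exact ⟨this.1, ih.2.tail this.2⟩
  obtain ⟨b1, b2, b3, b4⟩ := hbox _ hzR
  have hl := step_plane hv hzw b1 b2 b3 b4
  rw [hind.1] at hl
  exact Ex.of_path hxR hwR (hind.2.tail hl.2)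

/-- For `p < 1/2` and `ε > 0` there are `m > k` and `δ > 0` such that
`P_{p,q}(C_m(S_m)) < ε` for all `q ∈ [0, δ)`. -/
theorem Cm_small (k : ℕ) (p : ℝ) (hp0 : 0 ≤ p) (hp : p < 1 / 2)
    (ε : ℝ) (hε : 0 < ε) :
    ∃ m : ℕ, k < m ∧ ∃ δ : ℝ, 0 < δ ∧ ∀ q : ℝ, 0 ≤ q → q < δ →
      slabMeasure k p q (CmEvent k m (Sm k m)) < ENNReal.ofReal ε := by
  obtain ⟨m, hkm, hm⟩ := th_small hp0 hp k (C := (k:ℝ) + 1) (ε := ε / 2) (by positivity) (by positivity)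
  refine ⟨m, hkm, min 1 (ε / 2 / ((vertF k m).card + 1)), by positivity, fun q hq0 hq => ?_⟩
  have hq1 : q ≤ 1 := (hq.trans_le (min_le_left _ _)).le
  have hq2 := hq.trans_le (min_le_right _ _)
  rw [lt_div_iff₀ (by positivity)] at hq2
  have hfin1 : Fin' (⋃ e ∈ vertF k m, {ω : Config | ω e = true}) := by
    refine Fin'.biUnion _ _ fun e => ⟨{e}, fun ω ω' hw h => ?_⟩
    have := hw e (by simp)
    exact this.symm.trans h
  have hfin2 : ∀ v : Vtx, Fin' {ω : Config | ω ∘ lvl v.2.2 ∈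
      {ω | Ex ω (Bx (v.1, v.2.1) ((m:ℤ) - 1)) (v.1, v.2.1)}} := fun v =>
    Fin'.comp _ (fin_ex (Bx_finite _ _) _)
  unfold slabMeasure
  refine (bern_le _ (Cm_sub hkm) (hfin1.union (Fin'.biUnion _ _ hfin2))).trans_lt ?_
  rw [ENNReal.ofReal_lt_ofReal_iff hε]
  set P : EdgeIdx → ℝ := fun e => if e.2 = 2 then q else p with hP
  have hA : pr P (⋃ e ∈ vertF k m, {ω : Config | ω e = true}) ≤ (vertF k m).card * q := by
    refine (pr_biUnion_le P _ _).trans ?_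
    rw [← nsmul_eq_mul]
    refine Finset.sum_le_card_nsmul _ _ _ fun e he => ?_
    obtain ⟨v, -, rfl⟩ := Finset.mem_image.1 he
    rw [pr_single] <;> simp [hP, hq0, hq1]
  have hB : pr P (⋃ v ∈ startF k m, {ω : Config | ω ∘ lvl v.2.2 ∈
      {ω | Ex ω (Bx (v.1, v.2.1) ((m:ℤ) - 1)) (v.1, v.2.1)}}) ≤
      ((k:ℝ) + 1) * (m:ℝ) ^ 2 * th p ((m:ℤ) - 1) := by
    refine (pr_biUnion_le P _ _).trans ?_
    have hc : ((k:ℝ) + 1) * (m:ℝ) ^ 2 = ((startF k m).card : ℝ) := by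
      simp [startF]
      ring
    rw [hc, ← nsmul_eq_mul]
    refine Finset.sum_le_card_nsmul _ _ _ fun v _ => ?_
    rw [pr_comp _ (lvl_inj _) _ (fin_ex (Bx_finite _ _) _)]
    have : P ∘ lvl v.2.2 = fun _ => p := by
      funext ⟨w, b⟩
      cases b <;> simp [hP, lvl]
    rw [this, th_tr]
  have := pr_union_le P (⋃ e ∈ vertF k m, {ω : Config | ω e = true}) (⋃ v ∈ startF k m,
    {ω : Config | ω ∘ lvl v.2.2 ∈ {ω | Ex ω (Bx (v.1, v.2.1) ((m:ℤ) - 1)) (v.1, v.2.1)}})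
  nlinarith

end AnisoSlab
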